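/- arXiv:0811.2595 — 4 statements merged into one kernel-verified Lean document; each statement's English description precedes it below -/
import Mathlib

section
/- Under the connectivity and weight assumptions, the transition matrices Φ(k,s) = A(k)A(k−1)⋯A(s+1) satisfy: (1) lim_{k→∞} Φ(k,s) = (1/m) e eᵀ for every s, where e ∈ ℝ^m is the all-ones vector; and (2) the convergence is geometric with |[Φ(k,s)]_{i,j} − 1/m| ≤ θ β^{k−s} for all i,j and all k ≥ s, where θ = (1 − η/(4m²))^{−2} and β = (1 − η/(4m²))^{1/Q}. -/
open Filter Finset

/-- The transition matrices `Φ(k,s) = A(k) A(k-1) ⋯ A(s+1)` (for `k ≥ s`). -/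
noncomputable def transMat {m : ℕ} (A : ℕ → Matrix (Fin m) (Fin m) ℝ) (k s : ℕ) :
    Matrix (Fin m) (Fin m) ℝ :=
  ((List.range (k - s)).map fun t => A (k - t)).prod

lemma tm_pair {X : ℕ → ℝ} (hX : Monotone X) (D : Finset ℕ) (a b : ℕ) (u v : ℝ)
    (hl : ∀ d ∈ D, a ≤ d → u ≤ X d) (hh : ∀ d ∈ D, d < b → X (d + 1) ≤ v) :
    ∑ d ∈ D, (if a ≤ d ∧ d < b then (X (d + 1) - X d) ^ 2 else 0) ≤ (v - u) ^ 2 := by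
  rw [← Finset.sum_filter]
  set E := D.filter (fun d => a ≤ d ∧ d < b) with hE
  have hg : ∀ d, 0 ≤ X (d + 1) - X d := fun d => sub_nonneg.2 (hX (Nat.le_succ d))
  rcases E.eq_empty_or_nonempty with h0 | hne
  · rw [h0]; simp; positivity
  · have h1 : ∑ d ∈ E, (X (d + 1) - X d) ^ 2 ≤ (∑ d ∈ E, (X (d + 1) - X d)) ^ 2 :=
      Finset.sum_sq_le_sq_sum_of_nonneg (fun d _ => hg d)
    have hmin := Finset.min'_mem E hne
    have hmax := Finset.max'_mem E hne
    set p := E.min' hne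
    set q := E.max' hne
    have hpq : p ≤ q := Finset.min'_le _ _ hmax
    have h2 : ∑ d ∈ E, (X (d + 1) - X d) ≤ ∑ d ∈ Finset.Ico p (q + 1), (X (d + 1) - X d) := by
      apply Finset.sum_le_sum_of_subset_of_nonneg
      · intro d hd
        rw [Finset.mem_Ico]
        exact ⟨Finset.min'_le _ _ hd, Nat.lt_succ_of_le (Finset.le_max' _ _ hd)⟩
      · intro d _ _; exact hg d
    rw [Finset.sum_Ico_sub X (by omega)] at h2
    rw [hE, Finset.mem_filter] at hmin hmax
    have h3 := hl p hmin.1 hmin.2.1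
    have h4 := hh q hmax.1 hmax.2.2
    refine h1.trans (pow_le_pow_left₀ (Finset.sum_nonneg fun d _ => hg d) ?_ 2)
    linarith

lemma tm_row {m : ℕ} {X : ℕ → ℝ} (hX : Monotone X) (p : Fin m → ℕ) (D : Finset ℕ)
    (a y : Fin m → ℝ) (ha : ∀ i, 0 ≤ a i) (hs : ∑ i, a i = 1)
    (hl : ∀ d ∈ D, ∀ i, p i ≤ d → y i ≤ X d) (hh : ∀ d ∈ D, ∀ i, d < p i → X (d + 1) ≤ y i) :
    ∑ d ∈ D, (X (d + 1) - X d) ^ 2 *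
      ((∑ i, if p i ≤ d then a i else 0) * (∑ i, if d < p i then a i else 0)) ≤
      ∑ i, a i * y i ^ 2 - (∑ i, a i * y i) ^ 2 := by
  let F : Fin m → Fin m → ℝ := fun i j =>
    ∑ d ∈ D, (if p i ≤ d ∧ d < p j then (X (d + 1) - X d) ^ 2 else 0)
  have hF : ∀ i j, F i j ≤ (y j - y i) ^ 2 := fun i j =>
    tm_pair hX D (p i) (p j) (y i) (y j) (fun d hd h => hl d hd i h) (fun d hd h => hh d hd j h)
  have hF0 : ∀ i j, p j ≤ p i → F i j = 0 := by
    intro i j h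
    apply Finset.sum_eq_zero
    intro d _
    rw [if_neg]; omega
  have hFF : ∀ i j, F i j + F j i ≤ (y i - y j) ^ 2 := by
    intro i j
    rcases le_total (p j) (p i) with h | h
    · rw [hF0 i j h, zero_add]; exact hF j i
    · rw [hF0 j i h, add_zero]; have := hF i j; nlinarith
  have e1 : ∑ d ∈ D, (X (d + 1) - X d) ^ 2 *
      ((∑ i, if p i ≤ d then a i else 0) * (∑ i, if d < p i then a i else 0)) =
      ∑ i, ∑ j, a i * a j * F i j := by
    have : ∀ i j, a i * a j * F i j = ∑ d ∈ D, (X (d + 1) - X d) ^ 2 *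
        ((if p i ≤ d then a i else 0) * (if d < p j then a j else 0)) := by
      intro i j
      simp only [F, Finset.mul_sum]
      apply Finset.sum_congr rfl
      intro d _
      by_cases h1 : p i ≤ d <;> by_cases h2 : d < p j <;> simp [h1, h2]
      ring
    simp only [this]
    rw [Finset.sum_congr rfl (fun i _ => Finset.sum_comm), Finset.sum_comm]
    apply Finset.sum_congr rfl
    intro d _
    rw [Finset.sum_mul_sum, Finset.mul_sum]
    apply Finset.sum_congr rfl
    intro i _
    rw [Finset.mul_sum]
  have e2 : ∑ i, ∑ j, a i * a j * F i j = ∑ i, ∑ j, a i * a j * F j i := by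
    rw [Finset.sum_comm]
    apply Finset.sum_congr rfl; intro i _
    apply Finset.sum_congr rfl; intro j _
    ring
  have e3 : ∑ i, ∑ j, a i * a j * (y i - y j) ^ 2 =
      2 * (∑ i, a i * y i ^ 2 - (∑ i, a i * y i) ^ 2) := by
    have : ∀ i j, a i * a j * (y i - y j) ^ 2 =
      (a i * y i ^ 2) * a j + a i * (a j * y j ^ 2) - 2 * ((a i * y i) * (a j * y j)) := by
      intro i j; ring
    simp only [this, Finset.sum_sub_distrib, Finset.sum_add_distrib, ← Finset.mul_sum,
      ← Finset.sum_mul, hs]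
    ring
  have e4 : ∑ i, ∑ j, a i * a j * F i j + ∑ i, ∑ j, a i * a j * F j i ≤
      ∑ i, ∑ j, a i * a j * (y i - y j) ^ 2 := by
    simp only [← Finset.sum_add_distrib, ← mul_add]
    apply Finset.sum_le_sum; intro i _
    apply Finset.sum_le_sum; intro j _
    exact mul_le_mul_of_nonneg_left (hFF i j) (mul_nonneg (ha i) (ha j))
  rw [e1]
  linarith

/-- the cut at `d` is crossed by `M` -/
def tmCross {m : ℕ} (p : Fin m → ℕ) (M : Matrix (Fin m) (Fin m) ℝ) (d : ℕ) : Prop :=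
  ∃ i j, 0 < M i j ∧ ((p i ≤ d ∧ d < p j) ∨ (p j ≤ d ∧ d < p i))

lemma tm_step {m : ℕ} {X : ℕ → ℝ} (hX : Monotone X) (p : Fin m → ℕ) (D : Finset ℕ)
    (M : Matrix (Fin m) (Fin m) ℝ) (hnn : ∀ i j, 0 ≤ M i j) (hrow : ∀ i, ∑ j, M i j = 1)
    (hcol : ∀ j, ∑ i, M i j = 1) (η : ℝ) (hη0 : 0 < η)
    (hη : ∀ i j, 0 < M i j → η ≤ M i j) (hself : ∀ i, η ≤ M i i) (y : Fin m → ℝ)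
    (hl : ∀ d ∈ D, ∀ i, p i ≤ d → y i ≤ X d) (hh : ∀ d ∈ D, ∀ i, d < p i → X (d + 1) ≤ y i)
    (hc : ∀ d ∈ D, tmCross p M d) :
    η / 2 * ∑ d ∈ D, (X (d + 1) - X d) ^ 2 ≤ ∑ i, y i ^ 2 - ∑ i, (∑ j, M i j * y j) ^ 2 := by
  have h1 : ∀ k, ∑ d ∈ D, (X (d + 1) - X d) ^ 2 *
      ((∑ i, if p i ≤ d then M k i else 0) * (∑ i, if d < p i then M k i else 0)) ≤
      ∑ i, M k i * y i ^ 2 - (∑ i, M k i * y i) ^ 2 := fun k =>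
    tm_row hX p D (M k) y (hnn k) (hrow k) hl hh
  have h2 := Finset.sum_le_sum (fun k (_ : k ∈ (Finset.univ : Finset (Fin m))) => h1 k)
  rw [Finset.sum_sub_distrib] at h2
  have h3 : ∑ k, ∑ i, M k i * y i ^ 2 = ∑ i, y i ^ 2 := by
    rw [Finset.sum_comm]
    apply Finset.sum_congr rfl; intro i _
    rw [← Finset.sum_mul, hcol, one_mul]
  rw [h3] at h2
  refine le_trans ?_ h2
  rw [Finset.sum_comm, Finset.mul_sum]
  apply Finset.sum_le_sum
  intro d hd
  rw [← Finset.mul_sum, mul_comm]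
  apply mul_le_mul_of_nonneg_left _ (sq_nonneg _)
  have hP : ∀ k, 0 ≤ ∑ i, if p i ≤ d then M k i else 0 := fun k =>
    Finset.sum_nonneg fun i _ => by split_ifs; exacts [hnn k i, le_rfl]
  have hR : ∀ k, 0 ≤ ∑ i, if d < p i then M k i else 0 := fun k =>
    Finset.sum_nonneg fun i _ => by split_ifs; exacts [hnn k i, le_rfl]
  obtain ⟨k, j, hkj, hcase⟩ := hc d hd
  refine le_trans ?_ (Finset.single_le_sum (f := fun k => (∑ i, if p i ≤ d then M k i else 0) *
    (∑ i, if d < p i then M k i else 0)) (fun k _ => mul_nonneg (hP k) (hR k)) (Finset.mem_univ k))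
  have hsum : (∑ i, if p i ≤ d then M k i else 0) + (∑ i, if d < p i then M k i else 0) = 1 := by
    rw [← Finset.sum_add_distrib, ← hrow k]
    apply Finset.sum_congr rfl; intro i _
    by_cases h : p i ≤ d
    · simp [h, not_lt.2 h]
    · simp [h, not_le.1 h]
  have hPl : ∀ i, p i ≤ d → M k i ≤ ∑ i, if p i ≤ d then M k i else 0 := by
    intro i hi
    have := Finset.single_le_sum (f := fun i => if p i ≤ d then M k i else 0)
      (fun i _ => by split_ifs; exacts [hnn k i, le_rfl]) (Finset.mem_univ i)
    simpa [hi] using this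
  have hRl : ∀ i, d < p i → M k i ≤ ∑ i, if d < p i then M k i else 0 := by
    intro i hi
    have := Finset.single_le_sum (f := fun i => if d < p i then M k i else 0)
      (fun i _ => by split_ifs; exacts [hnn k i, le_rfl]) (Finset.mem_univ i)
    simpa [hi] using this
  have hb : η ≤ (∑ i, if p i ≤ d then M k i else 0) ∧ η ≤ (∑ i, if d < p i then M k i else 0) := by
    rcases hcase with ⟨h1, h2⟩ | ⟨h1, h2⟩
    · exact ⟨(hself k).trans (hPl k h1), (hη k j hkj).trans (hRl j h2)⟩
    · exact ⟨(hη k j hkj).trans (hPl j h1), (hself k).trans (hRl k h2)⟩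
  generalize (∑ i, if p i ≤ d then M k i else 0) = P at *
  generalize (∑ i, if d < p i then M k i else 0) = R at *
  obtain ⟨b1, b2⟩ := hb
  nlinarith [mul_nonneg (sub_nonneg.2 b1) (sub_nonneg.2 b2)]

lemma tm_window {m : ℕ} (A : ℕ → Matrix (Fin m) (Fin m) ℝ)
    (hnn : ∀ k i j, 0 ≤ A k i j)
    (hrow : ∀ k i, ∑ j, A k i j = 1)
    (hcol : ∀ k j, ∑ i, A k i j = 1)
    (η : ℝ) (hη0 : 0 < η)
    (hη : ∀ k i j, 0 < A k i j → η ≤ A k i j)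
    (hself : ∀ k i, η ≤ A k i i)
    (y : ℕ → Fin m → ℝ) (hy : ∀ k i, y (k + 1) i = ∑ j, A (k + 1) i j * y k j)
    {X : ℕ → ℝ} (hX : Monotone X) (p : Fin m → ℕ) (h0 : ∀ i, y 0 i = X (p i)) (N : ℕ) (n : ℕ) :
    ∃ C : Finset ℕ, (∀ d < N, (∃ l, 1 ≤ l ∧ l ≤ n ∧ tmCross p (A l) d) → d ∈ C) ∧
      (∀ d < N, d ∉ C → (∀ i, p i ≤ d → y n i ≤ X d) ∧ (∀ i, d < p i → X (d + 1) ≤ y n i)) ∧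
      η / 2 * ∑ d ∈ C, (X (d + 1) - X d) ^ 2 ≤ ∑ i, y 0 i ^ 2 - ∑ i, y n i ^ 2 := by
  classical
  induction n with
  | zero =>
    refine ⟨∅, ?_, ?_, by simp⟩
    · rintro d _ ⟨l, h1, h2, _⟩; omega
    · intro d _ _
      exact ⟨fun i hi => by rw [h0]; exact hX hi, fun i hi => by rw [h0]; exact hX hi⟩
  | succ n ih =>
    obtain ⟨C, hC1, hC2, hC3⟩ := ih
    let D := (Finset.range N).filter (fun d => d ∉ C ∧ tmCross p (A (n + 1)) d)
    have hD : ∀ d, d ∈ D ↔ d < N ∧ d ∉ C ∧ tmCross p (A (n + 1)) d := by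
      intro d; simp [D]
    have hdisj : Disjoint C D := by
      rw [Finset.disjoint_left]; intro d h1 h2
      exact ((hD d).1 h2).2.1 h1
    refine ⟨C ∪ D, ?_, ?_, ?_⟩
    · rintro d hd ⟨l, h1, h2, h3⟩
      rw [Finset.mem_union]
      by_cases hdC : d ∈ C
      · exact Or.inl hdC
      · right
        rw [hD]
        refine ⟨hd, hdC, ?_⟩
        have : l = n + 1 := by
          by_contra hne
          exact hdC (hC1 d hd ⟨l, h1, by omega, h3⟩)
        rwa [← this]
    · intro d hd hn
      rw [Finset.mem_union, not_or] at hn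
      have hnc : ¬ tmCross p (A (n + 1)) d := fun h => hn.2 ((hD d).2 ⟨hd, hn.1, h⟩)
      obtain ⟨g1, g2⟩ := hC2 d hd hn.1
      have hz : ∀ i j, ((p i ≤ d ∧ d < p j) ∨ (p j ≤ d ∧ d < p i)) → A (n + 1) i j = 0 := by
        intro i j h
        by_contra hne
        exact hnc ⟨i, j, lt_of_le_of_ne (hnn _ _ _) (Ne.symm hne), h⟩
      constructor
      · intro i hi
        rw [hy]
        calc ∑ j, A (n + 1) i j * y n j ≤ ∑ j, A (n + 1) i j * X d := by
              apply Finset.sum_le_sum; intro j _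
              by_cases hj : p j ≤ d
              · exact mul_le_mul_of_nonneg_left (g1 j hj) (hnn _ _ _)
              · rw [hz i j (Or.inl ⟨hi, not_le.1 hj⟩)]; simp
          _ = X d := by rw [← Finset.sum_mul, hrow, one_mul]
      · intro i hi
        rw [hy]
        calc X (d + 1) = ∑ j, A (n + 1) i j * X (d + 1) := by
              rw [← Finset.sum_mul, hrow, one_mul]
          _ ≤ ∑ j, A (n + 1) i j * y n j := by
              apply Finset.sum_le_sum; intro j _
              by_cases hj : p j ≤ d
              · rw [hz i j (Or.inr ⟨hj, hi⟩)]; simp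
              · exact mul_le_mul_of_nonneg_left (g2 j (not_le.1 hj)) (hnn _ _ _)
    · rw [Finset.sum_union hdisj, mul_add]
      have hs := tm_step hX p D (A (n + 1)) (hnn _) (hrow _) (hcol _) η hη0 (hη _) (hself _) (y n)
        (fun d hd => (hC2 d ((hD d).1 hd).1 ((hD d).1 hd).2.1).1)
        (fun d hd => (hC2 d ((hD d).1 hd).1 ((hD d).1 hd).2.1).2)
        (fun d hd => ((hD d).1 hd).2.2)
      simp only [← hy] at hs
      linarith

lemma tm_path {α : Type*} {r : α → α → Prop} (S : α → Prop) {a b : α}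
    (h : Relation.ReflTransGen r a b) (ha : S a) (hb : ¬ S b) :
    ∃ u v, r u v ∧ S u ∧ ¬ S v := by
  induction h with
  | refl => exact absurd ha hb
  | @tail b c _ hbc ih =>
    by_cases hs : S b
    · exact ⟨b, c, hbc, hs, hb⟩
    · exact ih hs

lemma tm_decay {m Q : ℕ} (hm : 0 < m) (A : ℕ → Matrix (Fin m) (Fin m) ℝ)
    (hnn : ∀ k i j, 0 ≤ A k i j)
    (hrow : ∀ k i, ∑ j, A k i j = 1)
    (hcol : ∀ k j, ∑ i, A k i j = 1)
    (η : ℝ) (hη0 : 0 < η)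
    (hη : ∀ k i j, 0 < A k i j → η ≤ A k i j)
    (hself : ∀ k i, η ≤ A k i i)
    (hconn : ∀ i j : Fin m,
      Relation.ReflTransGen (fun u u' => ∃ l, 1 ≤ l ∧ l ≤ Q ∧ 0 < A l u' u) i j)
    (y : ℕ → Fin m → ℝ) (hy : ∀ k i, y (k + 1) i = ∑ j, A (k + 1) i j * y k j)
    (hz : ∑ i, y 0 i = 0) :
    ∑ i, y Q i ^ 2 ≤ (1 - η / (2 * (m : ℝ) ^ 2)) * ∑ i, y 0 i ^ 2 := by
  have hmR : (0 : ℝ) < m := by exact_mod_cast hm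
  let σ := Tuple.sort (y 0)
  have hσ : Monotone (y 0 ∘ σ) := Tuple.monotone_sort (y 0)
  let f : ℕ → Fin m := fun n => ⟨min n (m - 1), by omega⟩
  have hf : Monotone f := by
    intro a b h
    simp only [f, Fin.mk_le_mk]
    omega
  let X : ℕ → ℝ := fun n => y 0 (σ (f n))
  have hX : Monotone X := fun a b h => hσ (hf h)
  let p : Fin m → ℕ := fun i => (σ.symm i : ℕ)
  have hp : ∀ i, p i < m := fun i => (σ.symm i).2
  have hfp : ∀ i, f (p i) = σ.symm i := by
    intro i
    apply Fin.ext
    have := hp i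
    simp only [f]
    show min (p i) (m - 1) = p i
    omega
  have h0 : ∀ i, y 0 i = X (p i) := by
    intro i
    simp only [X, hfp, Equiv.apply_symm_apply]
  obtain ⟨C, hC1, -, hC3⟩ := tm_window A hnn hrow hcol η hη0 hη hself y hy hX p h0 (m - 1) Q
  have hsub : Finset.range (m - 1) ⊆ C := by
    intro d hd
    rw [Finset.mem_range] at hd
    apply hC1 d hd
    obtain ⟨u, v, ⟨l, l1, l2, l3⟩, hu, hv⟩ := tm_path (fun i => p i ≤ d)
      (hconn (σ ⟨0, hm⟩) (σ ⟨m - 1, by omega⟩)) (by simp [p]) (by simp [p]; omega)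
    exact ⟨l, l1, l2, v, u, l3, Or.inr ⟨hu, not_le.1 hv⟩⟩
  have hG : ∑ d ∈ Finset.range (m - 1), (X (d + 1) - X d) ^ 2 ≤ ∑ d ∈ C, (X (d + 1) - X d) ^ 2 :=
    Finset.sum_le_sum_of_subset_of_nonneg hsub (fun _ _ _ => sq_nonneg _)
  have hrange : ∀ i, X 0 ≤ y 0 i ∧ y 0 i ≤ X (m - 1) := by
    intro i
    rw [h0]
    exact ⟨hX (Nat.zero_le _), hX (by have := hp i; omega)⟩
  have hlo : X 0 ≤ 0 := by
    by_contra h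
    have : ∑ i : Fin m, (0:ℝ) < ∑ i, y 0 i := by
      apply Finset.sum_lt_sum_of_nonempty ⟨⟨0, hm⟩, Finset.mem_univ _⟩
      intro i _; exact lt_of_lt_of_le (not_le.1 h) (hrange i).1
    simp [hz] at this
  have hhi : 0 ≤ X (m - 1) := by
    by_contra h
    have : ∑ i, y 0 i < ∑ i : Fin m, (0:ℝ) := by
      apply Finset.sum_lt_sum_of_nonempty ⟨⟨0, hm⟩, Finset.mem_univ _⟩
      intro i _; exact lt_of_le_of_lt (hrange i).2 (not_le.1 h)
    simp [hz] at this
  set G := ∑ d ∈ Finset.range (m - 1), (X (d + 1) - X d) ^ 2 with hGdef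
  have hG0 : 0 ≤ G := Finset.sum_nonneg fun _ _ => sq_nonneg _
  have hcs : (X (m - 1) - X 0) ^ 2 ≤ m * G := by
    have := sq_sum_le_card_mul_sum_sq (s := Finset.range (m - 1)) (f := fun d => X (d + 1) - X d)
    rw [Finset.sum_range_sub, Finset.card_range] at this
    refine this.trans (mul_le_mul_of_nonneg_right ?_ hG0)
    exact_mod_cast Nat.sub_le m 1
  have hV : ∑ i, y 0 i ^ 2 ≤ m * (m * G) := by
    calc ∑ i, y 0 i ^ 2 ≤ ∑ i : Fin m, (m * G) := by
          apply Finset.sum_le_sum; intro i _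
          refine le_trans ?_ hcs
          have := hrange i
          apply sq_le_sq'  <;> linarith
      _ = m * (m * G) := by simp
  have hkey : η / (2 * (m : ℝ) ^ 2) * ∑ i, y 0 i ^ 2 ≤ η / 2 * G := by
    calc η / (2 * (m : ℝ) ^ 2) * ∑ i, y 0 i ^ 2 ≤ η / (2 * (m : ℝ) ^ 2) * (m * (m * G)) :=
          mul_le_mul_of_nonneg_left hV (by positivity)
      _ = η / 2 * G := by field_simp
  have : η / 2 * G ≤ η / 2 * ∑ d ∈ C, (X (d + 1) - X d) ^ 2 :=
    mul_le_mul_of_nonneg_left hG (by positivity)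
  linarith

lemma tm_succ {m : ℕ} (A : ℕ → Matrix (Fin m) (Fin m) ℝ) (s n : ℕ) :
    transMat A (s + (n + 1)) s = A (s + (n + 1)) * transMat A (s + n) s := by
  unfold transMat
  rw [Nat.add_sub_cancel_left, Nat.add_sub_cancel_left, List.range_succ_eq_map, List.map_cons,
    List.prod_cons, List.map_map]
  congr 2
  apply List.map_congr_left
  intro t _
  simp only [Function.comp]
  congr 1
  omega

lemma tm_bound {m Q : ℕ} (hm : 0 < m) (hQ : 1 ≤ Q)
    (A : ℕ → Matrix (Fin m) (Fin m) ℝ)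
    (hnn : ∀ k i j, 0 ≤ A k i j)
    (hrow : ∀ k i, ∑ j, A k i j = 1)
    (hcol : ∀ k j, ∑ i, A k i j = 1)
    (η : ℝ) (hη0 : 0 < η) (hη1 : η < 1)
    (hη : ∀ k i j, 0 < A k i j → η ≤ A k i j)
    (hself : ∀ k i, η ≤ A k i i)
    (hconn : ∀ k : ℕ, ∀ i j : Fin m,
      Relation.ReflTransGen (fun u u' => ∃ l, 1 ≤ l ∧ l ≤ Q ∧ 0 < A (k + l) u' u) i j)
    (s n : ℕ) (i j : Fin m) :
    |transMat A (s + n) s i j - (m : ℝ)⁻¹| ≤ (1 - η / (4 * (m : ℝ) ^ 2)) ^ (n / Q) := by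
  have hmR : (1 : ℝ) ≤ m := by exact_mod_cast hm
  let y : ℕ → Fin m → ℝ := fun n i => transMat A (s + n) s i j - (m : ℝ)⁻¹
  have hy : ∀ n i, y (n + 1) i = ∑ l, A (s + (n + 1)) i l * y n l := by
    intro n i
    simp only [y, tm_succ, Matrix.mul_apply, mul_sub, Finset.sum_sub_distrib, ← Finset.sum_mul,
      hrow, one_mul]
  have hz : ∀ n, ∑ i, y n i = 0 := by
    intro n
    induction n with
    | zero =>
      simp [y, transMat, Matrix.one_apply]
      field_simp; simp
    | succ n ih =>
      simp only [hy]
      rw [Finset.sum_comm]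
      simp only [← Finset.sum_mul, hcol, one_mul, ih]
  have hV0 : ∑ i, y 0 i ^ 2 ≤ 1 := by
    have : ∀ i, y 0 i ^ 2 = (if i = j then 1 - 2 * (m:ℝ)⁻¹ else 0) + (m:ℝ)⁻¹ ^ 2 := by
      intro i
      by_cases h : i = j <;> simp [y, transMat, Matrix.one_apply, h]
      ring
    simp only [this, Finset.sum_add_distrib]
    simp
    have h1 : (m : ℝ) * ((m : ℝ) ^ 2)⁻¹ = (m : ℝ)⁻¹ := by field_simp
    have h2 : (0 : ℝ) ≤ (m : ℝ)⁻¹ := by positivity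
    linarith
  have hmono : ∀ n, ∑ i, y (n + 1) i ^ 2 ≤ ∑ i, y n i ^ 2 := by
    intro n
    have := tm_step (X := fun _ => 0) monotone_const (fun _ => 0) ∅ (A (s + (n + 1))) (hnn _)
      (hrow _) (hcol _) η hη0 (hη _) (hself _) (y n) (by simp) (by simp) (by simp)
    simp only [← hy] at this
    simp at this
    exact this
  have hanti : Antitone fun n => ∑ i, y n i ^ 2 := antitone_nat_of_succ_le hmono
  have hdec : ∀ n, ∑ i, y (n + Q) i ^ 2 ≤ (1 - η / (2 * (m : ℝ) ^ 2)) * ∑ i, y n i ^ 2 := by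
    intro n
    have := tm_decay (Q := Q) hm (fun l => A (s + n + l)) (fun k => hnn _) (fun k => hrow _)
      (fun k => hcol _) η hη0 (fun k => hη _) (fun k => hself _) (hconn (s + n))
      (fun l => y (n + l)) (fun k i => by
        have := hy (n + k) i
        simpa only [add_assoc] using this) (hz n)
    exact this
  have hsm : η / (4 * (m : ℝ) ^ 2) ≤ 1 / 4 := by
    rw [div_le_iff₀ (by positivity)]
    nlinarith
  set c := 1 - η / (4 * (m : ℝ) ^ 2) with hc
  have hc0 : 0 < c := by linarith
  have hq : 1 - η / (2 * (m : ℝ) ^ 2) ≤ c ^ 2 := by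
    have : η / (2 * (m : ℝ) ^ 2) = 2 * (η / (4 * (m : ℝ) ^ 2)) := by field_simp; norm_num
    rw [hc, this]
    nlinarith [sq_nonneg (η / (4 * (m : ℝ) ^ 2))]
  have hpow : ∀ r, ∑ i, y (Q * r) i ^ 2 ≤ (c ^ 2) ^ r := by
    intro r
    induction r with
    | zero => simpa using hV0
    | succ r ih =>
      rw [Nat.mul_succ]
      refine (hdec (Q * r)).trans ?_
      rw [pow_succ, mul_comm]
      have h0 : 0 ≤ ∑ i, y (Q * r) i ^ 2 := Finset.sum_nonneg fun _ _ => sq_nonneg _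
      exact (mul_le_mul_of_nonneg_left hq h0).trans (mul_le_mul_of_nonneg_right ih (sq_nonneg _))
  have hfin : y n i ^ 2 ≤ (c ^ (n / Q)) ^ 2 := by
    calc y n i ^ 2 ≤ ∑ i, y n i ^ 2 :=
          Finset.single_le_sum (f := fun i => y n i ^ 2) (fun _ _ => sq_nonneg _) (Finset.mem_univ i)
      _ ≤ ∑ i, y (Q * (n / Q)) i ^ 2 := hanti (Nat.mul_div_le n Q)
      _ ≤ (c ^ 2) ^ (n / Q) := hpow _
      _ = (c ^ (n / Q)) ^ 2 := by rw [← pow_mul, ← pow_mul, mul_comm]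
  exact abs_le_of_sq_le_sq hfin (by positivity)

/-- Lemma 3.2 (matrix convergence): under the doubly stochastic weight assumptions and the
`Q`-step strong connectivity assumption, the transition matrices `Φ(k,s)` converge to
`(1/m) e eᵀ` as `k → ∞` for every `s`, and the convergence is geometric:
`|[Φ(k,s)]_{i,j} − 1/m| ≤ θ β^{k−s}` with `θ = (1 − η/(4m²))⁻²` and
`β = (1 − η/(4m²))^{1/Q}`. -/
theorem transMat_convergence {m Q : ℕ} (hm : 0 < m) (hQ : 1 ≤ Q)
    (A : ℕ → Matrix (Fin m) (Fin m) ℝ)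
    (hnn : ∀ k i j, 0 ≤ A k i j)
    (hrow : ∀ k i, ∑ j, A k i j = 1)
    (hcol : ∀ k j, ∑ i, A k i j = 1)
    (η : ℝ) (hη0 : 0 < η) (hη1 : η < 1)
    (hη : ∀ k i j, 0 < A k i j → η ≤ A k i j)
    (hself : ∀ k i, η ≤ A k i i)
    (hconn : ∀ k : ℕ, ∀ i j : Fin m,
      Relation.ReflTransGen (fun u u' => ∃ l, 1 ≤ l ∧ l ≤ Q ∧ 0 < A (k + l) u' u) i j) :
    (∀ s : ℕ, ∀ i j : Fin m,
        Tendsto (fun k => transMat A k s i j) atTop (nhds ((m : ℝ)⁻¹))) ∧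
      (∀ s k : ℕ, s ≤ k → ∀ i j : Fin m,
        |transMat A k s i j - (m : ℝ)⁻¹| ≤
          ((1 - η / (4 * (m : ℝ) ^ 2)) ^ 2)⁻¹ *
            ((1 - η / (4 * (m : ℝ) ^ 2)) ^ ((1 : ℝ) / (Q : ℝ))) ^ (k - s)) := by
  have hmR : (1 : ℝ) ≤ m := by exact_mod_cast hm
  have hsm : η / (4 * (m : ℝ) ^ 2) ≤ 1 / 4 := by
    rw [div_le_iff₀ (by positivity)]
    nlinarith
  have hpos : 0 < η / (4 * (m : ℝ) ^ 2) := by positivity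
  have hB : ∀ s n : ℕ, ∀ i j : Fin m, |transMat A (s + n) s i j - (m : ℝ)⁻¹| ≤
      (1 - η / (4 * (m : ℝ) ^ 2)) ^ (n / Q) :=
    fun s n i j => tm_bound hm hQ A hnn hrow hcol η hη0 hη1 hη hself hconn s n i j
  set c := 1 - η / (4 * (m : ℝ) ^ 2) with hc
  have hc0 : 0 < c := by linarith
  have hc1 : c < 1 := by linarith
  have hQR : (0 : ℝ) < Q := by exact_mod_cast hQ
  set b := c ^ ((1 : ℝ) / (Q : ℝ)) with hb
  have hb0 : 0 < b := Real.rpow_pos_of_pos hc0 _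
  have hb1 : b < 1 := Real.rpow_lt_one hc0.le hc1 (by positivity)
  have hbQ : b ^ Q = c := by
    rw [hb, ← Real.rpow_natCast, ← Real.rpow_mul hc0.le, one_div, inv_mul_cancel₀ hQR.ne',
      Real.rpow_one]
  have main : ∀ s k : ℕ, s ≤ k → ∀ i j : Fin m,
        |transMat A k s i j - (m : ℝ)⁻¹| ≤ (c ^ 2)⁻¹ * b ^ (k - s) := by
    intro s k hsk i j
    obtain ⟨n, rfl⟩ := Nat.exists_eq_add_of_le hsk
    rw [Nat.add_sub_cancel_left]
    refine (hB s n i j).trans ?_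
    rw [inv_mul_eq_div, le_div_iff₀ (by positivity)]
    have h1 : n ≤ Q * (n / Q + 1) := (Nat.lt_mul_div_succ n hQ).le
    have h2 : c ^ (n / Q + 1) ≤ b ^ n := by
      rw [← hbQ, ← pow_mul]
      exact pow_le_pow_of_le_one hb0.le hb1.le (by rw [hbQ] at *; exact h1)
    refine le_trans ?_ h2
    rw [← pow_add]
    exact pow_le_pow_of_le_one hc0.le hc1.le (by omega)
  refine ⟨?_, main⟩
  intro s i j
  rw [tendsto_iff_dist_tendsto_zero]
  have ht : Tendsto (fun k : ℕ => (c ^ 2)⁻¹ * b ^ (k - s)) atTop (nhds 0) := by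
    have := ((tendsto_pow_atTop_nhds_zero_of_lt_one hb0.le hb1).comp
      (tendsto_sub_atTop_nat s)).const_mul ((c ^ 2)⁻¹)
    simpa using this
  refine squeeze_zero' (Eventually.of_forall fun _ => dist_nonneg) ?_ ht
  filter_upwards [eventually_ge_atTop s] with k hk
  rw [Real.dist_eq]
  exact main s k hk i j
end

section
/- Under Assumptions on closed convexity of X, network connectivity, and doubly stochastic weights, and assuming the subgradients of each f_i are uniformly bounded over X by scalars C_i (‖∇f_i(x)‖ ≤ C_i for all x ∈ X, i ∈ V), the iterates satisfy, for all j ∈ V and k ≥ 0: ‖y_{k+1} − w_{j,k+1}‖ ≤ m θ β^{k+1} max_{i∈V} ‖w_{i,0}‖ + θ Σ_{ℓ=1}^{k} α_ℓ β^{k+1−ℓ} Σ_{i=1}^{m} (C_i + ‖ε_{i,ℓ}‖) + (α_{k+1}/m) Σ_{i=1}^{m} (C_i + ‖ε_{i,k+1}‖) + α_{k+1} (C_j + ‖ε_{j,k+1}‖), where θ = (1 − η/(4m²))^{−2} and β = (1 − η/(4m²))^{1/Q}. -/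
open Filter Finset

lemma aux_onestep {m : ℕ} (A : Fin m → Fin m → ℝ)
    (harow : ∀ i, ∑ j, A i j = 1) (hacol : ∀ j, ∑ i, A i j = 1) (x x' : Fin m → ℝ)
    (hx : ∀ i, x' i = ∑ j, A i j * x j) :
    ∑ r, ∑ j, A r j * (x j - x' r) ^ 2 = ∑ i, x i ^ 2 - ∑ i, x' i ^ 2 := by
  have h1 : ∀ r, ∑ j, A r j * (x j - x' r) ^ 2 = ∑ j, A r j * x j ^ 2 - x' r ^ 2 := by
    intro r
    have : ∀ j, A r j * (x j - x' r) ^ 2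
        = A r j * x j ^ 2 - 2 * x' r * (A r j * x j) + x' r ^ 2 * A r j := by
      intro j; ring
    simp_rw [this]
    rw [Finset.sum_add_distrib, Finset.sum_sub_distrib, ← Finset.mul_sum, ← Finset.mul_sum,
      harow, ← hx]
    ring
  simp_rw [h1]
  rw [Finset.sum_sub_distrib, Finset.sum_comm]
  congr 1
  refine Finset.sum_congr rfl fun j _ => ?_
  rw [← Finset.sum_mul, hacol, one_mul]

lemma aux_two {m : ℕ} (b : Fin m → ℝ) (hb : ∀ j, 0 ≤ b j) (η : ℝ) (hη : 0 < η)
    (x : Fin m → ℝ) (c : ℝ) (p q : Fin m) (hp : η ≤ b p) (hq : η ≤ b q) :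
    η / 2 * (x q - x p) ^ 2 ≤ ∑ j, b j * (x j - c) ^ 2 := by
  have hnn : ∀ j, 0 ≤ b j * (x j - c) ^ 2 := fun j => mul_nonneg (hb j) (sq_nonneg _)
  by_cases h : p = q
  · subst h
    simpa using Finset.sum_nonneg fun j _ => hnn j
  · have h2 : ∑ j ∈ ({p, q} : Finset (Fin m)), b j * (x j - c) ^ 2
        ≤ ∑ j, b j * (x j - c) ^ 2 :=
      Finset.sum_le_sum_of_subset_of_nonneg (Finset.subset_univ _) fun j _ _ => hnn j
    rw [Finset.sum_pair h] at h2
    have h3 := mul_le_mul_of_nonneg_right hp (sq_nonneg (x p - c))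
    have h4 := mul_le_mul_of_nonneg_right hq (sq_nonneg (x q - c))
    nlinarith [mul_nonneg hη.le (sq_nonneg (x p - c + (x q - c)))]

lemma aux_gaps (y : ℕ → ℝ) (hy : Monotone y) (D : Finset ℕ) (hD : D.Nonempty) :
    ∑ d ∈ D, (y (d + 1) - y d) ^ 2 ≤ (y (D.max' hD + 1) - y (D.min' hD)) ^ 2 := by
  have hg : ∀ d, 0 ≤ y (d + 1) - y d := fun d => sub_nonneg.2 (hy (Nat.le_succ d))
  have h1 : ∑ d ∈ D, (y (d + 1) - y d) ^ 2 ≤ (∑ d ∈ D, (y (d + 1) - y d)) ^ 2 :=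
    Finset.sum_sq_le_sq_sum_of_nonneg fun d _ => hg d
  have hle : D.min' hD ≤ D.max' hD + 1 := (Finset.min'_le_max' D hD).trans (Nat.le_succ _)
  have h2 : ∑ d ∈ D, (y (d + 1) - y d) ≤ y (D.max' hD + 1) - y (D.min' hD) := by
    rw [← Finset.sum_Ico_sub y hle]
    refine Finset.sum_le_sum_of_subset_of_nonneg ?_ fun d _ _ => hg d
    intro d hd
    rw [Finset.mem_Ico]
    exact ⟨Finset.min'_le _ _ hd, Nat.lt_succ_of_le (Finset.le_max' _ _ hd)⟩
  exact h1.trans (pow_le_pow_left₀ (Finset.sum_nonneg fun d _ => hg d) h2 2)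

lemma aux_cross {V : Type*} (R : V → V → Prop) (S : V → Prop) {i j : V}
    (h : Relation.ReflTransGen R i j) (hi : S i) (hj : ¬ S j) :
    ∃ u u', R u u' ∧ S u ∧ ¬ S u' := by
  induction h with
  | refl => exact absurd hi hj
  | tail hab hbc ih =>
    rename_i b c
    by_cases hb : S b
    · exact ⟨b, c, hbc, hb, hj⟩
    · exact ih hb

lemma aux_sort {m : ℕ} (hm : 0 < m) (x : Fin m → ℝ) :
    ∃ (y : ℕ → ℝ) (ρ : Fin m → ℕ), Monotone y ∧ (∀ i, x i = y (ρ i)) ∧ (∀ i, ρ i < m) ∧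
      ∀ d, d < m → ∃ i, ρ i = d := by
  have hlt : ∀ n : ℕ, min n (m - 1) < m := fun n => by omega
  refine ⟨fun n => x (Tuple.sort x ⟨min n (m - 1), hlt n⟩),
    fun i => ((Tuple.sort x).symm i : ℕ), ?_, ?_, ?_, ?_⟩
  · intro a b hab
    refine Tuple.monotone_sort x ?_
    rw [Fin.mk_le_mk]
    omega
  · intro i
    have : (⟨min (((Tuple.sort x).symm i : Fin m) : ℕ) (m - 1), hlt _⟩ : Fin m)
        = (Tuple.sort x).symm i := by
      apply Fin.ext
      have := ((Tuple.sort x).symm i).2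
      simp only
      omega
    simp only [this, Equiv.apply_symm_apply]
  · intro i
    exact ((Tuple.sort x).symm i).2
  · intro d hd
    exact ⟨Tuple.sort x ⟨d, hd⟩, by simp⟩

/-- Contraction over a window of length `Q`. -/
lemma aux_window {m Q : ℕ} (hm : 0 < m) (a : ℕ → Fin m → Fin m → ℝ)
    (hann : ∀ k i j, 0 ≤ a k i j)
    (harow : ∀ k i, ∑ j, a k i j = 1)
    (hacol : ∀ k j, ∑ i, a k i j = 1)
    (η : ℝ) (hη0 : 0 < η)
    (haη : ∀ k i j, 0 < a k i j → η ≤ a k i j)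
    (haself : ∀ k i, η ≤ a k i i)
    (hconn : ∀ i j : Fin m,
      Relation.ReflTransGen (fun u u' => ∃ l, 1 ≤ l ∧ l ≤ Q ∧ 0 < a l u' u) i j)
    (x : ℕ → Fin m → ℝ) (hx : ∀ t i, x (t + 1) i = ∑ j, a (t + 1) i j * x t j)
    (hx0 : ∑ i, x 0 i = 0) :
    ∑ i, x Q i ^ 2 ≤ (1 - η / (2 * (m : ℝ) ^ 2)) * ∑ i, x 0 i ^ 2 := by
  classical
  obtain ⟨y, ρ, hy, hxy, hρm, hρs⟩ := aux_sort hm (x 0)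
  -- crossing
  let Cr : ℕ → ℕ → Prop := fun d t => ∃ r s, 0 < a (t + 1) r s ∧ ¬ (ρ r ≤ d ↔ ρ s ≤ d)
  have hex : ∀ d, d < m - 1 → ∃ t, t < Q ∧ Cr d t := by
    intro d hd
    obtain ⟨i, hi⟩ := hρs d (by omega)
    obtain ⟨j, hj⟩ := hρs (d + 1) (by omega)
    obtain ⟨u, u', ⟨l, hl1, hlQ, hl⟩, hu, hu'⟩ :=
      aux_cross _ (fun v => ρ v ≤ d) (hconn i j) (by simp [hi]) (by simp [hj])
    refine ⟨l - 1, by omega, u', u, ?_, ?_⟩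
    · rwa [Nat.sub_add_cancel hl1]
    · tauto
  have hfirst : ∀ d, d < m - 1 → ∃ t, t < Q ∧ Cr d t ∧ ∀ t' < t, ¬ Cr d t' := by
    intro d hd
    have hE : ∃ t, t < Q ∧ Cr d t := hex d hd
    refine ⟨Nat.find hE, (Nat.find_spec hE).1, (Nat.find_spec hE).2, ?_⟩
    intro t' ht' hc
    exact Nat.find_min hE ht' ⟨ht'.trans (Nat.find_spec hE).1, hc⟩
  -- invariance before the first crossing
  have hinv : ∀ d t, (∀ t' < t, ¬ Cr d t') →
      ∀ i, (ρ i ≤ d → x t i ≤ y d) ∧ (¬ ρ i ≤ d → y (d + 1) ≤ x t i) := by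
    intro d t
    induction t with
    | zero =>
      intro _ i
      rw [hxy i]
      exact ⟨fun h => hy h, fun h => hy (by omega)⟩
    | succ t ih =>
      intro hno i
      have ih' := ih fun t' ht' => hno t' (by omega)
      have hn : ∀ j, a (t + 1) i j ≠ 0 → (ρ i ≤ d ↔ ρ j ≤ d) := by
        intro j hj
        by_contra hc
        exact hno t (by omega) ⟨i, j, lt_of_le_of_ne (hann _ _ _) (Ne.symm hj), hc⟩
      constructor
      · intro hi
        rw [hx]
        calc ∑ j, a (t + 1) i j * x t j ≤ ∑ j, a (t + 1) i j * y d := by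
              refine Finset.sum_le_sum fun j _ => ?_
              by_cases hj : a (t + 1) i j = 0
              · simp [hj]
              · exact mul_le_mul_of_nonneg_left ((ih' j).1 ((hn j hj).1 hi)) (hann _ _ _)
          _ = y d := by rw [← Finset.sum_mul, harow, one_mul]
      · intro hi
        rw [hx]
        calc y (d + 1) = ∑ j, a (t + 1) i j * y (d + 1) := by
              rw [← Finset.sum_mul, harow, one_mul]
          _ ≤ ∑ j, a (t + 1) i j * x t j := by
              refine Finset.sum_le_sum fun j _ => ?_
              by_cases hj : a (t + 1) i j = 0
              · simp [hj]
              · exact mul_le_mul_of_nonneg_left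
                  ((ih' j).2 (fun h => hi ((hn j hj).2 h))) (hann _ _ _)
  -- choose time and receiver for each cut
  have hch : ∀ d, ∃ tr : ℕ × Fin m, d < m - 1 → tr.1 < Q ∧
      (∃ p, η ≤ a (tr.1 + 1) tr.2 p ∧ x tr.1 p ≤ y d) ∧
      (∃ q, η ≤ a (tr.1 + 1) tr.2 q ∧ y (d + 1) ≤ x tr.1 q) := by
    intro d
    by_cases hd : d < m - 1
    · obtain ⟨t, htQ, ⟨r, s, hrs, hne⟩, hno⟩ := hfirst d hd
      have hI := hinv d t hno
      refine ⟨(t, r), fun _ => ⟨htQ, ?_⟩⟩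
      by_cases hr : ρ r ≤ d
      · have hs : ¬ ρ s ≤ d := by tauto
        exact ⟨⟨r, haself _ _, (hI r).1 hr⟩, ⟨s, haη _ _ _ hrs, (hI s).2 hs⟩⟩
      · have hs : ρ s ≤ d := by tauto
        exact ⟨⟨s, haη _ _ _ hrs, (hI s).1 hs⟩, ⟨r, haself _ _, (hI r).2 hr⟩⟩
    · exact ⟨(0, ⟨0, hm⟩), fun h => absurd h hd⟩
  choose τ hτ using hch
  set G : ℝ := ∑ d ∈ range (m - 1), (y (d + 1) - y d) ^ 2 with hG
  -- total decrease
  have hdec : η / 2 * G ≤ ∑ i, x 0 i ^ 2 - ∑ i, x Q i ^ 2 := by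
    have htel : ∑ t ∈ range Q, ∑ r, ∑ j, a (t + 1) r j * (x t j - x (t + 1) r) ^ 2
        = ∑ i, x 0 i ^ 2 - ∑ i, x Q i ^ 2 := by
      rw [← Finset.sum_range_sub' (fun t => ∑ i, x t i ^ 2)]
      exact Finset.sum_congr rfl fun t _ =>
        aux_onestep (a (t + 1)) (harow _) (hacol _) (x t) (x (t + 1)) (hx t)
    rw [← htel, ← Finset.sum_product', hG,
      ← Finset.sum_fiberwise_of_maps_to (t := range Q ×ˢ (univ : Finset (Fin m))) (g := τ),
      Finset.mul_sum]
    · refine Finset.sum_le_sum fun tr _ => ?_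
      obtain ⟨t, r⟩ := tr
      rcases (Finset.filter (fun d => τ d = (t, r)) (range (m - 1))).eq_empty_or_nonempty
        with hE | hE
      · rw [hE]
        simp only [Finset.sum_empty, mul_zero]
        exact Finset.sum_nonneg fun j _ => mul_nonneg (hann _ _ _) (sq_nonneg _)
      · have h1 := aux_gaps y hy _ hE
        set D := Finset.filter (fun d => τ d = (t, r)) (range (m - 1)) with hD
        have hmin := Finset.min'_mem D hE
        have hmax := Finset.max'_mem D hE
        have hmm := Finset.min'_le_max' D hE
        set d0 := D.min' hE
        set d1 := D.max' hE
        rw [hD, Finset.mem_filter, Finset.mem_range] at hmin hmax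
        obtain ⟨_, ⟨p, hp, hxp⟩, _⟩ := hτ d0 hmin.1
        obtain ⟨_, _, ⟨q, hq, hxq⟩⟩ := hτ d1 hmax.1
        rw [hmin.2] at hp hxp
        rw [hmax.2] at hq hxq
        simp only at hp hxp hq hxq
        have h2 := aux_two (a (t + 1) r) (hann _ _) η hη0 (x t) (x (t + 1) r) p q hp hq
        have h3 : y d0 ≤ y (d1 + 1) := hy (by omega)
        have h4 : (y (d1 + 1) - y d0) ^ 2 ≤ (x t q - x t p) ^ 2 :=
          pow_le_pow_left₀ (by linarith) (by linarith) 2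
        exact (mul_le_mul_of_nonneg_left (h1.trans h4) (by linarith)).trans h2
    · intro d hd
      rw [Finset.mem_range] at hd
      simp [(hτ d hd).1]
  -- range bound
  have hm0 : (0 : ℝ) < m := by exact_mod_cast hm
  have hrange : ∑ i, x 0 i ^ 2 ≤ (m : ℝ) ^ 2 * G := by
    have hR : (y (m - 1) - y 0) ^ 2 ≤ (m : ℝ) * G := by
      rw [← Finset.sum_range_sub y]
      refine (sq_sum_le_card_mul_sum_sq).trans ?_
      rw [Finset.card_range]
      refine mul_le_mul_of_nonneg_right ?_ (Finset.sum_nonneg fun _ _ => sq_nonneg _)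
      exact_mod_cast Nat.sub_le m 1
    have hb : ∀ i, y 0 ≤ x 0 i ∧ x 0 i ≤ y (m - 1) := by
      intro i
      rw [hxy i]
      have := hρm i
      exact ⟨hy (Nat.zero_le _), hy (by omega)⟩
    have hlo : y 0 ≤ 0 := by
      have : ∑ i : Fin m, y 0 ≤ ∑ i, x 0 i := Finset.sum_le_sum fun i _ => (hb i).1
      rw [hx0] at this
      simp at this
      nlinarith
    have hhi : 0 ≤ y (m - 1) := by
      have : ∑ i, x 0 i ≤ ∑ i : Fin m, y (m - 1) := Finset.sum_le_sum fun i _ => (hb i).2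
      rw [hx0] at this
      simp at this
      nlinarith
    have : ∑ i, x 0 i ^ 2 ≤ ∑ i : Fin m, (m : ℝ) * G := by
      refine Finset.sum_le_sum fun i _ => le_trans ?_ hR
      have := hb i
      apply sq_le_sq'
      · linarith
      · linarith
    simp at this
    nlinarith
  have hG' : η / (2 * (m : ℝ) ^ 2) * ∑ i, x 0 i ^ 2 ≤ η / 2 * G := by
    calc _ ≤ η / (2 * (m : ℝ) ^ 2) * ((m : ℝ) ^ 2 * G) :=
          mul_le_mul_of_nonneg_left hrange (by positivity)
      _ = η / 2 * G := by field_simp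
  linarith

lemma aux_decay {m Q : ℕ} (hm : 0 < m) (hQ : 1 ≤ Q) (a : ℕ → Fin m → Fin m → ℝ)
    (hann : ∀ k i j, 0 ≤ a k i j)
    (harow : ∀ k i, ∑ j, a k i j = 1)
    (hacol : ∀ k j, ∑ i, a k i j = 1)
    (η : ℝ) (hη0 : 0 < η) (hη1 : η < 1)
    (haη : ∀ k i j, 0 < a k i j → η ≤ a k i j)
    (haself : ∀ k i, η ≤ a k i i)
    (hconn : ∀ k : ℕ, ∀ i j : Fin m,
      Relation.ReflTransGen (fun u u' => ∃ l, 1 ≤ l ∧ l ≤ Q ∧ 0 < a (k + l) u' u) i j)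
    (x : ℕ → Fin m → ℝ) (hx : ∀ t i, x (t + 1) i = ∑ j, a (t + 1) i j * x t j)
    (hx0 : ∑ i, x 0 i = 0) (hx1 : ∑ i, x 0 i ^ 2 ≤ 1) (N : ℕ) (j : Fin m) :
    |x N j| ≤ ((1 - η / (4 * (m : ℝ) ^ 2)) ^ 2)⁻¹ *
      ((1 - η / (4 * (m : ℝ) ^ 2)) ^ ((1 : ℝ) / (Q : ℝ))) ^ N := by
  have hm1 : (1 : ℝ) ≤ m := by exact_mod_cast hm
  have hm2 : (1 : ℝ) ≤ (m : ℝ) ^ 2 := one_le_pow₀ hm1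
  set e : ℝ := η / (4 * (m : ℝ) ^ 2) with he
  have he0 : 0 < e := by positivity
  have he1 : e < 1 / 4 := by
    rw [he, div_lt_iff₀ (by positivity)]
    linarith
  have h2e : η / (2 * (m : ℝ) ^ 2) = 2 * e := by rw [he]; field_simp; norm_num
  have hsum : ∀ t, ∑ i, x t i = 0 := by
    intro t
    induction t with
    | zero => exact hx0
    | succ t ih =>
      simp_rw [hx]
      rw [Finset.sum_comm]
      simp_rw [← Finset.sum_mul, hacol, one_mul]
      exact ih
  have hmono : ∀ t s, ∑ i, x (t + s) i ^ 2 ≤ ∑ i, x t i ^ 2 := by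
    intro t s
    induction s with
    | zero => simp
    | succ s ih =>
      refine le_trans ?_ ih
      have h := aux_onestep (a (t + s + 1)) (harow _) (hacol _) (x (t + s)) (x (t + s + 1))
        (hx (t + s))
      have h' : 0 ≤ ∑ r, ∑ j, a (t + s + 1) r j * (x (t + s) j - x (t + s + 1) r) ^ 2 :=
        Finset.sum_nonneg fun r _ => Finset.sum_nonneg fun j _ =>
          mul_nonneg (hann _ _ _) (sq_nonneg _)
      rw [← add_assoc]
      linarith
  have hwin : ∀ t, ∑ i, x (t + Q) i ^ 2 ≤ (1 - 2 * e) * ∑ i, x t i ^ 2 := by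
    intro t
    have := aux_window (Q := Q) hm (fun s => a (t + s)) (fun _ => hann _) (fun _ => harow _)
      (fun _ => hacol _) η hη0 (fun _ => haη _) (fun _ => haself _) (hconn t)
      (fun s => x (t + s)) (fun s i => hx (t + s) i) (hsum t)
    rw [h2e] at this
    exact this
  have hpow : ∀ q, ∑ i, x (Q * q) i ^ 2 ≤ (1 - 2 * e) ^ q := by
    intro q
    induction q with
    | zero => simpa using hx1
    | succ q ih =>
      rw [Nat.mul_succ, pow_succ']
      exact (hwin _).trans (mul_le_mul_of_nonneg_left ih (by linarith))
  have hsq : x N j ^ 2 ≤ ((1 - e) ^ (N / Q)) ^ 2 := by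
    calc x N j ^ 2 ≤ ∑ i, x N i ^ 2 :=
          Finset.single_le_sum (f := fun i => x N i ^ 2) (fun i _ => sq_nonneg _)
            (Finset.mem_univ j)
      _ = ∑ i, x (Q * (N / Q) + N % Q) i ^ 2 := by rw [Nat.div_add_mod]
      _ ≤ _ := hmono _ _
      _ ≤ _ := hpow _
      _ ≤ ((1 - e) ^ 2) ^ (N / Q) :=
          pow_le_pow_left₀ (by linarith) (by nlinarith [sq_nonneg e]) _
      _ = _ := by rw [← pow_mul, ← pow_mul, mul_comm]
  have hc0 : 0 < 1 - e := by linarith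
  have habs : |x N j| ≤ (1 - e) ^ (N / Q) := abs_le_of_sq_le_sq hsq (by positivity)
  refine habs.trans ?_
  set c := 1 - e
  set β := c ^ ((1 : ℝ) / (Q : ℝ)) with hβ
  have hβ0 : 0 < β := Real.rpow_pos_of_pos hc0 _
  have hβ1 : β ≤ 1 := Real.rpow_le_one hc0.le (by linarith) (by positivity)
  have hβQ : β ^ Q = c := by
    rw [hβ, one_div]
    exact Real.rpow_inv_natCast_pow hc0.le (by omega)
  rw [← div_eq_inv_mul, le_div_iff₀ (by positivity), ← pow_add, ← hβQ, ← pow_mul]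
  refine pow_le_pow_of_le_one hβ0.le hβ1 ?_
  have h1 := Nat.div_add_mod N Q
  have h2 := Nat.mod_lt N (by omega : Q > 0)
  rw [mul_add]
  omega

/-- deviation of the transition matrix column from the average -/
noncomputable def auxZ {m : ℕ} (a : ℕ → Fin m → Fin m → ℝ) (s : ℕ) (i : Fin m) :
    ℕ → Fin m → ℝ
  | 0 => fun j => (if j = i then 1 else 0) - (m : ℝ)⁻¹
  | t + 1 => fun j => ∑ l, a (s + (t + 1)) j l * auxZ a s i t l

lemma auxZ_init {m : ℕ} (hm : 0 < m) (a : ℕ → Fin m → Fin m → ℝ) (s : ℕ) (i : Fin m) :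
    ∑ j, auxZ a s i 0 j = 0 ∧ ∑ j, auxZ a s i 0 j ^ 2 ≤ 1 := by
  have hm0 : (m : ℝ) ≠ 0 := by positivity
  have hm0' : (0 : ℝ) < m := by positivity
  constructor
  · simp [auxZ, Finset.sum_sub_distrib, hm0]
  · have : ∀ j, auxZ a s i 0 j ^ 2
        = (if j = i then 1 - 2 * (m : ℝ)⁻¹ else 0) + (m : ℝ)⁻¹ ^ 2 := by
      intro j
      by_cases h : j = i
      · simp [auxZ, h]; ring
      · simp [auxZ, h]
    simp_rw [this]
    rw [Finset.sum_add_distrib, Finset.sum_ite_eq' ]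
    simp
    have h1 : (m : ℝ) * ((m : ℝ) ^ 2)⁻¹ = (m : ℝ)⁻¹ := by field_simp
    rw [h1]
    have : 0 < (m : ℝ)⁻¹ := by positivity
    linarith

/-- Lemma 4.1 (disagreement estimate): under closed convexity of `X`, the connectivity and
doubly stochastic weight assumptions, and uniform boundedness `‖∇f_i(x)‖ ≤ C_i` on `X` of the
subgradients, the iterates of the distributed stochastic subgradient algorithm satisfy, for all
agents `j` and all `k ≥ 0`,
`‖y_{k+1} − w_{j,k+1}‖ ≤ mθβ^{k+1} max_i ‖w_{i,0}‖
  + θ ∑_{ℓ=1}^k α_ℓ β^{k+1−ℓ} ∑_i (C_i + ‖ε_{i,ℓ}‖)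
  + (α_{k+1}/m) ∑_i (C_i + ‖ε_{i,k+1}‖) + α_{k+1}(C_j + ‖ε_{j,k+1}‖)`,
where `θ = (1 − η/(4m²))⁻²` and `β = (1 − η/(4m²))^{1/Q}`. -/
theorem disagreement_estimate {n m Q : ℕ} (hm : 0 < m) (hQ : 1 ≤ Q)
    (X : Set (EuclideanSpace ℝ (Fin n))) (hXne : X.Nonempty)
    (hXcl : IsClosed X) (hXcv : Convex ℝ X)
    -- Euclidean projection onto X
    (P : EuclideanSpace ℝ (Fin n) → EuclideanSpace ℝ (Fin n))
    (hPmem : ∀ z, P z ∈ X)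
    (hPdist : ∀ z, ∀ x ∈ X, ‖z - P z‖ ≤ ‖z - x‖)
    -- subgradients, uniformly bounded over X
    (g : Fin m → EuclideanSpace ℝ (Fin n) → EuclideanSpace ℝ (Fin n))
    (C : Fin m → ℝ) (hC : ∀ i, ∀ x ∈ X, ‖g i x‖ ≤ C i)
    -- weights: doubly stochastic, uniformly positive entries
    (a : ℕ → Fin m → Fin m → ℝ)
    (hann : ∀ k i j, 0 ≤ a k i j)
    (harow : ∀ k i, ∑ j, a k i j = 1)
    (hacol : ∀ k j, ∑ i, a k i j = 1)
    (η : ℝ) (hη0 : 0 < η) (hη1 : η < 1)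
    (haη : ∀ k i j, 0 < a k i j → η ≤ a k i j)
    (haself : ∀ k i, η ≤ a k i i)
    -- Q-step strong connectivity
    (hconn : ∀ k : ℕ, ∀ i j : Fin m,
      Relation.ReflTransGen (fun u u' => ∃ l, 1 ≤ l ∧ l ≤ Q ∧ 0 < a (k + l) u' u) i j)
    -- stepsizes and errors
    (α : ℕ → ℝ) (hα : ∀ k, 0 < α k)
    (ε : Fin m → ℕ → EuclideanSpace ℝ (Fin n))
    -- the algorithm
    (w v : Fin m → ℕ → EuclideanSpace ℝ (Fin n))
    (hw0 : ∀ i, w i 0 ∈ X)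
    (hv : ∀ i k, v i k = ∑ j, a (k + 1) i j • w j k)
    (hw : ∀ i k, w i (k + 1) = P (v i k - α (k + 1) • (g i (v i k) + ε i (k + 1))))
    (y : ℕ → EuclideanSpace ℝ (Fin n))
    (hy : ∀ k, y k = (m : ℝ)⁻¹ • ∑ i, w i k) :
    ∀ (j : Fin m) (k : ℕ),
      ‖y (k + 1) - w j (k + 1)‖ ≤
        m * ((1 - η / (4 * (m : ℝ) ^ 2)) ^ 2)⁻¹ *
            ((1 - η / (4 * (m : ℝ) ^ 2)) ^ ((1 : ℝ) / (Q : ℝ))) ^ (k + 1) *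
            (Finset.univ.sup' (Finset.univ_nonempty_iff.mpr (Fin.pos_iff_nonempty.mp hm))
              fun i => ‖w i 0‖)
          + ((1 - η / (4 * (m : ℝ) ^ 2)) ^ 2)⁻¹ *
            ∑ ℓ ∈ Finset.Icc 1 k, α ℓ *
              ((1 - η / (4 * (m : ℝ) ^ 2)) ^ ((1 : ℝ) / (Q : ℝ))) ^ (k + 1 - ℓ) *
              ∑ i, (C i + ‖ε i ℓ‖)
          + (α (k + 1) / m) * ∑ i, (C i + ‖ε i (k + 1)‖)
          + α (k + 1) * (C j + ‖ε j (k + 1)‖) := by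
  intro j k
  have hm0 : (0 : ℝ) < m := by exact_mod_cast hm
  have hmne : (m : ℝ) ≠ 0 := hm0.ne'
  set θ : ℝ := ((1 - η / (4 * (m : ℝ) ^ 2)) ^ 2)⁻¹ with hθ
  set β : ℝ := (1 - η / (4 * (m : ℝ) ^ 2)) ^ ((1 : ℝ) / (Q : ℝ)) with hβ
  have hZ : ∀ s i N j, |auxZ a s i N j| ≤ θ * β ^ N := by
    intro s i N j
    refine aux_decay hm hQ (fun t => a (s + t)) (fun _ => hann _) (fun _ => harow _)
      (fun _ => hacol _) η hη0 hη1 (fun _ => haη _) (fun _ => haself _) ?_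
      (auxZ a s i) (fun t l => rfl) (auxZ_init hm a s i).1 (auxZ_init hm a s i).2 N j
    intro k' i' j'
    have := hconn (s + k') i' j'
    simpa only [add_assoc] using this
  -- membership
  have hwX : ∀ i k, w i k ∈ X := by
    intro i k
    cases k with
    | zero => exact hw0 i
    | succ k => rw [hw]; exact hPmem _
  have hvX : ∀ i k, v i k ∈ X := by
    intro i k
    rw [hv]
    exact hXcv.sum_mem (fun l _ => hann _ _ _) (harow _ _) (fun l _ => hwX l k)
  -- projection nonexpansive
  have hPne : ∀ z, ∀ x ∈ X, ‖P z - x‖ ≤ ‖z - x‖ := by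
    intro z x hx
    have hinf : ‖z - P z‖ = ⨅ u : X, ‖z - u‖ := by
      have : Nonempty X := hXne.to_subtype
      apply le_antisymm
      · exact le_ciInf fun u => hPdist z u u.2
      · exact ciInf_le ⟨0, by rintro _ ⟨u, rfl⟩; exact norm_nonneg _⟩ (⟨P z, hPmem z⟩ : X)
    have hin := (norm_eq_iInf_iff_real_inner_le_zero hXcv (hPmem z)).1 hinf x hx
    have hex : ‖z - x‖ ^ 2 = ‖z - P z‖ ^ 2 + ‖P z - x‖ ^ 2 - 2 * inner ℝ (z - P z) (x - P z) := by
      have : z - x = (z - P z) - (x - P z) := by abel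
      rw [this, norm_sub_sq_real, norm_sub_rev x (P z)]
      ring
    apply le_of_sq_le_sq _ (norm_nonneg _)
    nlinarith [sq_nonneg ‖z - P z‖]
  -- perturbations
  let p : Fin m → ℕ → EuclideanSpace ℝ (Fin n) := fun i l => w i l - v i (l - 1)
  have hp : ∀ i l, ‖p i (l + 1)‖ ≤ α (l + 1) * (C i + ‖ε i (l + 1)‖) := by
    intro i l
    have h1 : ‖p i (l + 1)‖ ≤ ‖α (l + 1) • (g i (v i l) + ε i (l + 1))‖ := by
      have := hPne (v i l - α (l + 1) • (g i (v i l) + ε i (l + 1))) (v i l) (hvX i l)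
      rw [sub_sub_cancel_left, norm_neg, ← hw] at this
      exact this
    refine h1.trans ?_
    rw [norm_smul, Real.norm_of_nonneg (hα _).le]
    refine mul_le_mul_of_nonneg_left ((norm_add_le _ _).trans ?_) (hα _).le
    have := hC i _ (hvX i l)
    linarith
  have hws : ∀ i l, w i (l + 1) = ∑ j, a (l + 1) i j • w j l + p i (l + 1) := by
    intro i l
    simp only [p, Nat.add_sub_cancel, hv]
    abel
  clear_value p
  have hys : ∀ l, y (l + 1) = y l + (m : ℝ)⁻¹ • ∑ i, p i (l + 1) := by
    intro l
    rw [hy, hy, ← smul_add]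
    congr 1
    simp_rw [hws]
    rw [Finset.sum_add_distrib, Finset.sum_comm]
    simp_rw [← Finset.sum_smul, hacol, one_smul]
  have hz0 : ∀ s (j : Fin m) (q : Fin m → EuclideanSpace ℝ (Fin n)),
      ∑ i, auxZ a s i 0 j • q i = q j - (m : ℝ)⁻¹ • ∑ i, q i := by
    intro s j q
    simp only [auxZ, sub_smul, Finset.sum_sub_distrib, ite_smul, one_smul, zero_smul,
      Finset.sum_ite_eq, Finset.mem_univ, if_true, Finset.smul_sum]
  have hrec : ∀ s t (j : Fin m) (q : Fin m → EuclideanSpace ℝ (Fin n)),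
      ∑ l, a (s + t + 1) j l • ∑ i, auxZ a s i t l • q i = ∑ i, auxZ a s i (t + 1) j • q i := by
    intro s t j q
    simp only [auxZ, Finset.sum_smul, Finset.smul_sum, mul_smul]
    rw [Finset.sum_comm]
    rfl
  have hD : ∀ K j, w j K - y K = ∑ i, auxZ a 0 i K j • w i 0
      + ∑ l ∈ Finset.Icc 1 K, ∑ i, auxZ a l i (K - l) j • p i l := by
    intro K
    induction K with
    | zero => intro j; simp [hz0, hy]
    | succ K ih =>
      intro j
      have h1 : w j (K + 1) - y (K + 1) = ∑ l, a (K + 1) j l • (w l K - y K)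
          + (p j (K + 1) - (m : ℝ)⁻¹ • ∑ i, p i (K + 1)) := by
        rw [hws, hys]
        simp_rw [smul_sub]
        rw [Finset.sum_sub_distrib, ← Finset.sum_smul, harow, one_smul]
        abel
      rw [h1, Finset.sum_Icc_succ_top (by omega), Nat.sub_self, hz0, ← add_assoc]
      congr 1
      simp_rw [ih, smul_add]
      rw [Finset.sum_add_distrib]
      congr 1
      · have := hrec 0 K j (fun i => w i 0)
        simpa only [Nat.zero_add] using this
      · simp_rw [Finset.smul_sum (s := Finset.Icc 1 K)]
        rw [Finset.sum_comm]
        refine Finset.sum_congr rfl fun l hl => ?_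
        rw [Finset.mem_Icc] at hl
        have := hrec l (K - l) j (fun i => p i l)
        rw [show l + (K - l) + 1 = K + 1 by omega, show K - l + 1 = K + 1 - l by omega] at this
        exact this
  rw [norm_sub_rev, hD, Finset.sum_Icc_succ_top (by omega), Nat.sub_self, hz0, ← add_assoc]
  have hsm : ∀ s N (q : Fin m → EuclideanSpace ℝ (Fin n)),
      ‖∑ i, auxZ a s i N j • q i‖ ≤ θ * β ^ N * ∑ i, ‖q i‖ := by
    intro s N q
    rw [Finset.mul_sum]
    refine (norm_sum_le _ _).trans (Finset.sum_le_sum fun i _ => ?_)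
    rw [norm_smul, Real.norm_eq_abs]
    exact mul_le_mul_of_nonneg_right (hZ _ _ _ _) (norm_nonneg _)
  have hθβ : ∀ N, 0 ≤ θ * β ^ N := fun N => (abs_nonneg _).trans (hZ 0 j N j)
  have hpj : ∀ l, 1 ≤ l → ∀ i, ‖p i l‖ ≤ α l * (C i + ‖ε i l‖) := by
    intro l hl i
    obtain ⟨l', rfl⟩ : ∃ l', l = l' + 1 := ⟨l - 1, by omega⟩
    exact hp i l'
  have hps : ∀ l, 1 ≤ l → ∑ i, ‖p i l‖ ≤ α l * ∑ i, (C i + ‖ε i l‖) := by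
    intro l hl
    rw [Finset.mul_sum]
    exact Finset.sum_le_sum fun i _ => hpj l hl i
  set M := Finset.univ.sup' (Finset.univ_nonempty_iff.mpr (Fin.pos_iff_nonempty.mp hm))
              fun i => ‖w i 0‖ with hM
  have b1 : ‖∑ i, auxZ a 0 i (k + 1) j • w i 0‖ ≤ m * θ * β ^ (k + 1) * M := by
    refine (hsm 0 (k + 1) _).trans ?_
    have : ∑ i, ‖w i 0‖ ≤ ∑ i : Fin m, M :=
      Finset.sum_le_sum fun i _ => Finset.le_sup' (fun i => ‖w i 0‖) (Finset.mem_univ i)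
    rw [Finset.sum_const, Finset.card_univ, Fintype.card_fin, nsmul_eq_mul] at this
    calc _ ≤ θ * β ^ (k + 1) * (m * M) := mul_le_mul_of_nonneg_left this (hθβ _)
      _ = _ := by ring
  have b2 : ‖∑ l ∈ Finset.Icc 1 k, ∑ i, auxZ a l i (k + 1 - l) j • p i l‖ ≤
      θ * ∑ ℓ ∈ Finset.Icc 1 k, α ℓ * β ^ (k + 1 - ℓ) * ∑ i, (C i + ‖ε i ℓ‖) := by
    rw [Finset.mul_sum]
    refine (norm_sum_le _ _).trans (Finset.sum_le_sum fun l hl => ?_)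
    rw [Finset.mem_Icc] at hl
    refine (hsm _ _ _).trans ?_
    calc _ ≤ θ * β ^ (k + 1 - l) * (α l * ∑ i, (C i + ‖ε i l‖)) :=
          mul_le_mul_of_nonneg_left (hps l hl.1) (hθβ _)
      _ = _ := by ring
  have b3 : ‖(m : ℝ)⁻¹ • ∑ i, p i (k + 1)‖ ≤ (α (k + 1) / m) * ∑ i, (C i + ‖ε i (k + 1)‖) := by
    rw [norm_smul, Real.norm_of_nonneg (by positivity)]
    calc _ ≤ (m : ℝ)⁻¹ * (α (k + 1) * ∑ i, (C i + ‖ε i (k + 1)‖)) :=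
          mul_le_mul_of_nonneg_left ((norm_sum_le _ _).trans (hps _ (by omega))) (by positivity)
      _ = _ := by ring
  have b4 := hp j k
  have t1 := norm_add_le (∑ i, auxZ a 0 i (k + 1) j • w i 0
    + ∑ l ∈ Finset.Icc 1 k, ∑ i, auxZ a l i (k + 1 - l) j • p i l)
    (p j (k + 1) - (m : ℝ)⁻¹ • ∑ i, p i (k + 1))
  have t2 := norm_add_le (∑ i, auxZ a 0 i (k + 1) j • w i 0)
    (∑ l ∈ Finset.Icc 1 k, ∑ i, auxZ a l i (k + 1 - l) j • p i l)
  have t3 := norm_sub_le (p j (k + 1)) ((m : ℝ)⁻¹ • ∑ i, p i (k + 1))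
  linarith
end

section
/- Under the same assumptions (X nonempty closed convex; connectivity; doubly stochastic weights; ‖∇f_i(x)‖ ≤ C_i on X; E[‖ε_{i,k+1}‖²] ≤ ν̄_i²), if the stepsizes satisfy lim_{k→∞} α_k = 0, then lim_{k→∞} E[‖w_{j,k} − y_k‖] = 0 for all j ∈ V, i.e., the agents asymptotically reach consensus in mean. -/
open Filter Finset MeasureTheory

def phiC {m : ℕ} (a : ℕ → Fin m → Fin m → ℝ) (s : ℕ) : ℕ → Fin m → Fin m → ℝ
  | 0 => fun i j => if i = j then 1 else 0
  | t + 1 => fun i j => ∑ l, a (s + t + 1) i l * phiC a s t l j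

lemma phiC_nonneg {m : ℕ} (a : ℕ → Fin m → Fin m → ℝ) (hann : ∀ k i j, 0 ≤ a k i j)
    (s t : ℕ) : ∀ i j, 0 ≤ phiC a s t i j := by
  induction t with
  | zero => intro i j; simp only [phiC]; split_ifs <;> norm_num
  | succ t ih =>
    intro i j
    simp only [phiC]
    exact Finset.sum_nonneg fun l _ => mul_nonneg (hann _ _ _) (ih _ _)

lemma phiC_row {m : ℕ} (a : ℕ → Fin m → Fin m → ℝ) (harow : ∀ k i, ∑ j, a k i j = 1)
    (s t : ℕ) : ∀ i, ∑ j, phiC a s t i j = 1 := by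
  induction t with
  | zero => intro i; simp [phiC]
  | succ t ih =>
    intro i
    simp only [phiC]
    rw [Finset.sum_comm]
    simp only [← Finset.mul_sum, ih, mul_one, harow]

lemma phiC_step {m : ℕ} (a : ℕ → Fin m → Fin m → ℝ) (hann : ∀ k i j, 0 ≤ a k i j)
    (η : ℝ) (hη0 : 0 < η) (haη : ∀ k i j, 0 < a k i j → η ≤ a k i j)
    (s t : ℕ) (i l j : Fin m) (h : η ^ t ≤ phiC a s t l j) (hp : 0 < a (s + t + 1) i l) :
    η ^ (t + 1) ≤ phiC a s (t + 1) i j := by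
  simp only [phiC]
  calc η ^ (t + 1) = η * η ^ t := by ring
    _ ≤ a (s + t + 1) i l * phiC a s t l j :=
      mul_le_mul (haη _ _ _ hp) h (by positivity) (hann _ _ _)
    _ ≤ _ := Finset.single_le_sum (f := fun l => a (s + t + 1) i l * phiC a s t l j)
      (fun l _ => mul_nonneg (hann _ _ _) (phiC_nonneg a hann s t _ _)) (Finset.mem_univ l)

lemma phiC_stay {m : ℕ} (a : ℕ → Fin m → Fin m → ℝ) (hann : ∀ k i j, 0 ≤ a k i j)
    (η : ℝ) (hη0 : 0 < η) (haη : ∀ k i j, 0 < a k i j → η ≤ a k i j)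
    (haself : ∀ k i, η ≤ a k i i)
    (s t r : ℕ) (i j : Fin m) (h : η ^ t ≤ phiC a s t i j) :
    η ^ (t + r) ≤ phiC a s (t + r) i j := by
  induction r with
  | zero => exact h
  | succ r ih =>
    exact phiC_step a hann η hη0 haη s (t + r) i i j ih (lt_of_lt_of_le hη0 (haself _ _))

lemma exists_cross {V : Type*} (r : V → V → Prop) (S : Set V) {x y : V}
    (h : Relation.ReflTransGen r x y) (hx : x ∈ S) (hy : y ∉ S) :
    ∃ u u', u ∈ S ∧ u' ∉ S ∧ r u u' := by
  induction h with
  | refl => exact absurd hx hy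
  | tail hab hbc ih =>
    rename_i b c
    by_cases hb : b ∈ S
    · exact ⟨b, c, hb, hy, hbc⟩
    · exact ih hb

lemma phiC_lower {m Q : ℕ} (a : ℕ → Fin m → Fin m → ℝ) (hann : ∀ k i j, 0 ≤ a k i j)
    (η : ℝ) (hη0 : 0 < η) (haη : ∀ k i j, 0 < a k i j → η ≤ a k i j)
    (haself : ∀ k i, η ≤ a k i i)
    (hconn : ∀ k : ℕ, ∀ i j : Fin m,
      Relation.ReflTransGen (fun u u' => ∃ l, 1 ≤ l ∧ l ≤ Q ∧ 0 < a (k + l) u' u) i j)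
    (s : ℕ) (i j : Fin m) : η ^ (m * Q) ≤ phiC a s (m * Q) i j := by
  classical
  have key : ∀ q : ℕ, min m (q + 1) ≤
      (Finset.univ.filter (fun i => η ^ (q * Q) ≤ phiC a s (q * Q) i j)).card := by
    intro q
    induction q with
    | zero =>
      refine le_trans (min_le_right _ _) ?_
      rw [Nat.succ_le_iff, Finset.card_pos]
      exact ⟨j, by simp [phiC]⟩
    | succ q ih =>
      set S := Finset.univ.filter (fun i => η ^ (q * Q) ≤ phiC a s (q * Q) i j) with hS
      set T := Finset.univ.filter
        (fun i => η ^ ((q + 1) * Q) ≤ phiC a s ((q + 1) * Q) i j) with hT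
      have hjS : j ∈ S := by
        rw [hS]
        simp only [Finset.mem_filter, Finset.mem_univ, true_and]
        have := phiC_stay a hann η hη0 haη haself s 0 (q * Q) j j (by simp [phiC])
        simpa using this
      have hST : S ⊆ T := by
        intro x hx
        simp only [hS, hT, Finset.mem_filter, Finset.mem_univ, true_and] at hx ⊢
        have := phiC_stay a hann η hη0 haη haself s (q * Q) Q x j hx
        rwa [show (q + 1) * Q = q * Q + Q by ring]
      by_cases hfull : ∀ x, x ∈ S
      · have h1 : T = Finset.univ := Finset.eq_univ_iff_forall.2 fun x => hST (hfull x)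
        rw [h1]; simp
      · push Not at hfull
        obtain ⟨x, hx⟩ := hfull
        obtain ⟨u, u', hu, hu', l, hl1, hlQ, hpos⟩ :=
          exists_cross _ (S : Set (Fin m)) (hconn (s + q * Q) j x)
            (by exact_mod_cast hjS) (by exact_mod_cast hx)
        have hu1 : u ∈ S := by exact_mod_cast hu
        have hu2 : u' ∉ S := by exact_mod_cast hu'
        have hu'T : u' ∈ T := by
          simp only [hS, hT, Finset.mem_filter, Finset.mem_univ, true_and] at hu1 ⊢
          obtain ⟨l', rfl⟩ : ∃ l', l = l' + 1 := ⟨l - 1, by omega⟩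
          have h1 := phiC_stay a hann η hη0 haη haself s (q * Q) l' u j hu1
          have h2 := phiC_step a hann η hη0 haη s (q * Q + l') u' u j h1
            (by rwa [show s + (q * Q + l') + 1 = s + q * Q + (l' + 1) by ring])
          have h3 := phiC_stay a hann η hη0 haη haself s _ (Q - (l' + 1)) u' j h2
          have e : q * Q + l' + 1 + (Q - (l' + 1)) = (q + 1) * Q := by
            rw [add_mul]; omega
          rwa [e] at h3
        have hlt : S.card < T.card :=
          Finset.card_lt_card ⟨hST, fun h => hu2 (h hu'T)⟩
        omega
  have h1 := key m
  have h2 : Finset.univ.filter (fun i => η ^ (m * Q) ≤ phiC a s (m * Q) i j) = Finset.univ := by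
    rw [← Finset.card_eq_iff_eq_univ]
    apply le_antisymm (Finset.card_le_univ _)
    simpa using h1
  have h3 : i ∈ Finset.univ.filter (fun i => η ^ (m * Q) ≤ phiC a s (m * Q) i j) := by
    rw [h2]; simp
  simpa using h3

lemma contr {m : ℕ} {E : Type*} [NormedAddCommGroup E] [NormedSpace ℝ E]
    (p q : Fin m → ℝ) (hp : ∀ l, 0 ≤ p l) (hp1 : ∑ l, p l = 1) (hq1 : ∑ l, q l = 1)
    (δ : ℝ) (hδ : 0 ≤ δ) (hq : ∀ l, δ ≤ q l) (x : Fin m → E) (h : ℝ)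
    (hx : ∀ i j, ‖x i - x j‖ ≤ h) (hh : 0 ≤ h) :
    ‖∑ l, p l • x l - ∑ l, q l • x l‖ ≤ (1 - δ) * h := by
  classical
  have e1 : ∑ l, p l • x l - ∑ l, q l • x l = ∑ l, ∑ l', (p l * q l') • (x l - x l') := by
    simp only [smul_sub, Finset.sum_sub_distrib]
    congr 1
    · refine Finset.sum_congr rfl fun l _ => ?_
      rw [← Finset.sum_smul, ← Finset.mul_sum, hq1, mul_one]
    · rw [Finset.sum_comm]
      refine Finset.sum_congr rfl fun l _ => ?_
      rw [← Finset.sum_smul, ← Finset.sum_mul, hp1, one_mul]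
  rw [e1]
  have e2 : ∀ l l', ‖(p l * q l') • (x l - x l')‖ ≤
      p l * q l' * h - (if l = l' then p l * δ * h else 0) := by
    intro l l'
    have hpq : 0 ≤ p l * q l' := mul_nonneg (hp l) (hδ.trans (hq l'))
    rw [norm_smul, Real.norm_of_nonneg hpq]
    split_ifs with hl
    · subst hl
      have := mul_le_mul_of_nonneg_right (mul_le_mul_of_nonneg_left (hq l) (hp l)) hh
      simpa using this
    · have := mul_le_mul_of_nonneg_left (hx l l') hpq
      linarith
  calc _ ≤ ∑ l, ∑ l', (p l * q l' * h - (if l = l' then p l * δ * h else 0)) := by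
        refine (norm_sum_le _ _).trans (Finset.sum_le_sum fun l _ => ?_)
        exact (norm_sum_le _ _).trans (Finset.sum_le_sum fun l' _ => e2 l l')
    _ = (1 - δ) * h := by
        simp only [Finset.sum_sub_distrib, Finset.sum_ite_eq, Finset.mem_univ, if_true,
          ← Finset.sum_mul, ← Finset.mul_sum, hp1, hq1]
        ring

lemma perturb {m : ℕ} {E : Type*} [NormedAddCommGroup E] [NormedSpace ℝ E]
    (a : ℕ → Fin m → Fin m → ℝ) (hann : ∀ k i j, 0 ≤ a k i j)
    (harow : ∀ k i, ∑ j, a k i j = 1) (x : Fin m → ℕ → E) (b : ℕ → ℝ)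
    (hx : ∀ i k, ‖x i (k + 1) - ∑ j, a (k + 1) i j • x j k‖ ≤ b k) (s t : ℕ) :
    ∀ i, ‖x i (s + t) - ∑ l, phiC a s t i l • x l s‖ ≤ ∑ r ∈ Finset.range t, b (s + r) := by
  induction t with
  | zero => intro i; simp [phiC]
  | succ t ih =>
    intro i
    have e : x i (s + (t + 1)) - ∑ l, phiC a s (t + 1) i l • x l s =
        (x i (s + t + 1) - ∑ j, a (s + t + 1) i j • x j (s + t)) +
        ∑ j, a (s + t + 1) i j • (x j (s + t) - ∑ l, phiC a s t j l • x l s) := by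
      simp only [smul_sub, Finset.sum_sub_distrib, phiC, Finset.sum_smul, Finset.smul_sum,
        mul_smul]
      rw [Finset.sum_comm, ← add_assoc s t 1]
      abel
    rw [e, Finset.sum_range_succ]
    refine (norm_add_le _ _).trans ?_
    have h1 := hx i (s + t)
    have h2 : ‖∑ j, a (s + t + 1) i j • (x j (s + t) - ∑ l, phiC a s t j l • x l s)‖
        ≤ ∑ r ∈ Finset.range t, b (s + r) := by
      calc _ ≤ ∑ j, a (s + t + 1) i j * ∑ r ∈ Finset.range t, b (s + r) := by
            refine (norm_sum_le _ _).trans (Finset.sum_le_sum fun j _ => ?_)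
            rw [norm_smul, Real.norm_of_nonneg (hann _ _ _)]
            exact mul_le_mul_of_nonneg_left (ih j) (hann _ _ _)
        _ = _ := by rw [← Finset.sum_mul, harow, one_mul]
    linarith

lemma proj_bound {E : Type*} [NormedAddCommGroup E] [NormedSpace ℝ E] (X : Set E)
    (P : E → E) (hPdist : ∀ z, ∀ x ∈ X, ‖z - P z‖ ≤ ‖z - x‖) (x d : E) (hx : x ∈ X) :
    ‖P (x - d) - x‖ ≤ 2 * ‖d‖ := by
  have h1 := hPdist (x - d) x hx
  have h2 : ‖x - d - x‖ = ‖d‖ := by rw [sub_sub_cancel_left, norm_neg]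
  have h3 := norm_sub_le_norm_sub_add_norm_sub (P (x - d)) (x - d) x
  rw [norm_sub_rev (P (x - d)) (x - d)] at h3
  linarith

def UBC {Ω : Type*} [MeasurableSpace Ω] (μ : Measure Ω) {m : ℕ} {E : Type*}
    [NormedAddCommGroup E] (x : Fin m → ℕ → Ω → E) (k : ℕ) (c : ℝ) : Prop :=
  ∃ h : Ω → ℝ, Integrable h μ ∧ (∀ ω i j, ‖x i k ω - x j k ω‖ ≤ h ω) ∧ ∫ ω, h ω ∂μ ≤ c

lemma UBC_step {Ω : Type*} [MeasurableSpace Ω] (μ : Measure Ω) {m : ℕ} (hm : 0 < m) {E : Type*}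
    [NormedAddCommGroup E] [NormedSpace ℝ E]
    (a : ℕ → Fin m → Fin m → ℝ) (hann : ∀ k i j, 0 ≤ a k i j)
    (harow : ∀ k i, ∑ j, a k i j = 1) (x : Fin m → ℕ → Ω → E) (b : ℕ → Ω → ℝ)
    (hx : ∀ i k ω, ‖x i (k + 1) ω - ∑ j, a (k + 1) i j • x j k ω‖ ≤ b k ω)
    (hb : ∀ k, Integrable (b k) μ) (c : ℝ) (s t : ℕ) (δ : ℝ) (hδ : 0 ≤ δ) (hδ1 : δ ≤ 1)
    (hphi : ∀ i j, δ ≤ phiC a s t i j) (h : UBC μ x s c) :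
    UBC μ x (s + t) ((1 - δ) * c + 2 * ∑ r ∈ Finset.range t, ∫ ω, b (s + r) ω ∂μ) := by
  obtain ⟨h, hi, hle, hint⟩ := h
  have hbi : Integrable (fun ω => ∑ r ∈ Finset.range t, b (s + r) ω) μ :=
    integrable_finsetSum _ fun r _ => hb _
  refine ⟨fun ω => (1 - δ) * h ω + 2 * ∑ r ∈ Finset.range t, b (s + r) ω,
    (hi.const_mul _).add (hbi.const_mul _), ?_, ?_⟩
  · intro ω i j
    have p := fun i => perturb a hann harow (fun i k => x i k ω) (fun k => b k ω)
      (fun i k => hx i k ω) s t i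
    have hh : 0 ≤ h ω := (norm_nonneg _).trans (hle ω i i)
    have q := contr (phiC a s t i) (phiC a s t j) (phiC_nonneg a hann s t i)
      (phiC_row a harow s t i) (phiC_row a harow s t j) δ hδ (hphi j) (fun l => x l s ω)
      (h ω) (hle ω) hh
    have pi := p i
    have pj := p j
    set A := ∑ l, phiC a s t i l • x l s ω
    set B := ∑ l, phiC a s t j l • x l s ω
    have e : x i (s + t) ω - x j (s + t) ω =
      (x i (s + t) ω - A) + (A - B) - (x j (s + t) ω - B) := by abel
    rw [e]
    have n1 := norm_sub_le ((x i (s + t) ω - A) + (A - B)) (x j (s + t) ω - B)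
    have n2 := norm_add_le (x i (s + t) ω - A) (A - B)
    linarith
  · rw [integral_add (hi.const_mul _) (hbi.const_mul _), integral_const_mul, integral_const_mul,
      integral_finsetSum _ fun r _ => hb _]
    have := mul_le_mul_of_nonneg_left hint (sub_nonneg.2 hδ1)
    linarith

lemma UBC.mono {Ω : Type*} [MeasurableSpace Ω] {μ : Measure Ω} {m : ℕ} {E : Type*}
    [NormedAddCommGroup E] {x : Fin m → ℕ → Ω → E} {k : ℕ} {c c' : ℝ} (h : UBC μ x k c)
    (hc : c ≤ c') : UBC μ x k c' := by
  obtain ⟨h, h1, h2, h3⟩ := h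
  exact ⟨h, h1, h2, h3.trans hc⟩

lemma UBC_lim (U : ℕ → ℝ → Prop) (hmono : ∀ k c c', U k c → c ≤ c' → U k c')
    (hex : ∀ k, ∃ c, U k c) (B : ℕ) (hB : 0 < B) (δ : ℝ) (hδ : 0 < δ) (hδ1 : δ ≤ 1)
    (e : ℕ → ℝ) (he : Tendsto e atTop (nhds 0))
    (hstep : ∀ s c, U s c → U (s + B) ((1 - δ) * c + e s)) (ξ : ℝ) (hξ : 0 < ξ) :
    ∃ N, ∀ k ≥ N, U k ξ := by
  have h1 : ∀ᶠ k in atTop, e k < δ * (ξ / 2) := he.eventually_lt_const (by positivity)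
  obtain ⟨K, hK⟩ := eventually_atTop.1 h1
  choose c0 hc0 using hex
  set c : ℝ := ∑ r ∈ Finset.range B, |c0 (K + r)| with hc
  have hcr : ∀ r < B, U (K + r) c := by
    intro r hr
    refine hmono _ _ _ (hc0 _) ((le_abs_self _).trans ?_)
    exact Finset.single_le_sum (f := fun r => |c0 (K + r)|) (fun _ _ => abs_nonneg _)
      (Finset.mem_range.2 hr)
  have hq : ∀ r < B, ∀ q : ℕ, U (K + r + q * B) (ξ / 2 + (1 - δ) ^ q * c) := by
    intro r hr q
    induction q with
    | zero => simpa using hmono _ _ _ (hcr r hr) (by linarith)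
    | succ q ih =>
      have := hstep _ _ ih
      rw [show K + r + (q + 1) * B = K + r + q * B + B by ring]
      refine hmono _ _ _ this ?_
      have := hK (K + r + q * B) (by omega)
      rw [pow_succ]
      nlinarith
  have h2 : Tendsto (fun q : ℕ => (1 - δ) ^ q * c) atTop (nhds 0) := by
    simpa using (tendsto_pow_atTop_nhds_zero_of_lt_one (r := 1 - δ) (by linarith)
      (by linarith)).mul_const c
  obtain ⟨N, hN⟩ := eventually_atTop.1 (h2.eventually_lt_const (half_pos hξ))
  refine ⟨K + N * B, fun k hk => ?_⟩
  have hd := Nat.mod_add_div (k - K) B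
  have hq' : N ≤ (k - K) / B := by
    rw [Nat.le_div_iff_mul_le hB]; omega
  have := hq ((k - K) % B) (Nat.mod_lt _ hB) ((k - K) / B)
  have e1 : K + (k - K) % B + (k - K) / B * B = k := by
    rw [mul_comm ((k - K) / B) B]; omega
  rw [e1] at this
  exact hmono _ _ _ this (by linarith [hN _ hq'])

/-- Corollary 5.2 (consensus in mean): under the closed convexity, connectivity and doubly
stochastic weight assumptions, uniform subgradient bounds `‖∇f_i(x)‖ ≤ C_i` on `X`, and
uniformly bounded second moments `E[‖ε_{i,k+1}‖²] ≤ ν̄_i²`, if the stepsizes satisfy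
`α_k → 0`, then `lim_k E[‖w_{j,k} − y_k‖] = 0` for every agent `j`. -/
theorem consensus_in_mean {n m Q : ℕ} (hm : 0 < m) (hQ : 1 ≤ Q)
    {Ω : Type*} [MeasurableSpace Ω] (μ : Measure Ω) [IsProbabilityMeasure μ]
    (X : Set (EuclideanSpace ℝ (Fin n))) (hXne : X.Nonempty)
    (hXcl : IsClosed X) (hXcv : Convex ℝ X)
    -- Euclidean projection onto X
    (P : EuclideanSpace ℝ (Fin n) → EuclideanSpace ℝ (Fin n))
    (hPmem : ∀ z, P z ∈ X)
    (hPdist : ∀ z, ∀ x ∈ X, ‖z - P z‖ ≤ ‖z - x‖)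
    -- subgradients, uniformly bounded over X
    (g : Fin m → EuclideanSpace ℝ (Fin n) → EuclideanSpace ℝ (Fin n))
    (C : Fin m → ℝ) (hC : ∀ i, ∀ x ∈ X, ‖g i x‖ ≤ C i)
    -- weights: doubly stochastic, uniformly positive entries
    (a : ℕ → Fin m → Fin m → ℝ)
    (hann : ∀ k i j, 0 ≤ a k i j)
    (harow : ∀ k i, ∑ j, a k i j = 1)
    (hacol : ∀ k j, ∑ i, a k i j = 1)
    (η : ℝ) (hη0 : 0 < η) (hη1 : η < 1)
    (haη : ∀ k i j, 0 < a k i j → η ≤ a k i j)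
    (haself : ∀ k i, η ≤ a k i i)
    -- Q-step strong connectivity
    (hconn : ∀ k : ℕ, ∀ i j : Fin m,
      Relation.ReflTransGen (fun u u' => ∃ l, 1 ≤ l ∧ l ≤ Q ∧ 0 < a (k + l) u' u) i j)
    -- stepsizes converging to α₀ ≥ 0
    (α : ℕ → ℝ) (hα : ∀ k, 0 < α k)
    (hαlim : Tendsto α atTop (nhds 0))
    -- stochastic errors with uniformly bounded second moments
    (ε : Fin m → ℕ → Ω → EuclideanSpace ℝ (Fin n))
    (hεmeas : ∀ i k, Measurable (ε i k))
    (ν : Fin m → ℝ)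
    (hεint : ∀ i k, Integrable (fun ω => ‖ε i (k + 1) ω‖ ^ 2) μ)
    (hν : ∀ i k, ∫ ω, ‖ε i (k + 1) ω‖ ^ 2 ∂μ ≤ ν i ^ 2)
    -- the algorithm (pathwise), with deterministic initial points in X
    (w v : Fin m → ℕ → Ω → EuclideanSpace ℝ (Fin n))
    (w₀ : Fin m → EuclideanSpace ℝ (Fin n))
    (hw0 : ∀ i ω, w i 0 ω = w₀ i) (hw0X : ∀ i, w₀ i ∈ X)
    (hv : ∀ i k ω, v i k ω = ∑ j, a (k + 1) i j • w j k ω)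
    (hw : ∀ i k ω,
      w i (k + 1) ω = P (v i k ω - α (k + 1) • (g i (v i k ω) + ε i (k + 1) ω)))
    (y : ℕ → Ω → EuclideanSpace ℝ (Fin n))
    (hy : ∀ k ω, y k ω = (m : ℝ)⁻¹ • ∑ i, w i k ω) :
    ∀ j : Fin m,
      Tendsto (fun k => ∫ ω, ‖w j k ω - y k ω‖ ∂μ) atTop (nhds 0) := by
  classical
  intro j
  have hvX' : ∀ i k ω, (∀ j, w j k ω ∈ X) → v i k ω ∈ X := by
    intro i k ω h
    rw [hv]
    exact hXcv.sum_mem (fun _ _ => hann _ _ _) (harow _ _) (fun j _ => h j)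
  have hwX : ∀ i k ω, w i k ω ∈ X := by
    intro i k ω
    cases k with
    | zero => rw [hw0]; exact hw0X i
    | succ k => rw [hw]; exact hPmem _
  have hvX : ∀ i k ω, v i k ω ∈ X := fun i k ω => hvX' i k ω fun j => hwX j k ω
  have hC0 : ∀ i, 0 ≤ C i := by
    intro i
    obtain ⟨x, hx⟩ := hXne
    exact (norm_nonneg _).trans (hC i x hx)
  set b : ℕ → Ω → ℝ := fun k ω =>
    ∑ i, 2 * α (k + 1) * (C i + 1 + ‖ε i (k + 1) ω‖ ^ 2) with hbdef
  have hx : ∀ i k ω, ‖w i (k + 1) ω - ∑ j, a (k + 1) i j • w j k ω‖ ≤ b k ω := by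
    intro i k ω
    rw [← hv, hw]
    refine (proj_bound X P hPdist _ _ (hvX i k ω)).trans ?_
    have hs := Finset.single_le_sum
      (f := fun i => 2 * α (k + 1) * (C i + 1 + ‖ε i (k + 1) ω‖ ^ 2))
      (fun i _ => by have := hC0 i; have := hα (k + 1); positivity) (Finset.mem_univ i)
    refine le_trans ?_ hs
    rw [norm_smul, Real.norm_of_nonneg (hα _).le, ← mul_assoc]
    refine mul_le_mul_of_nonneg_left ?_ (by have := hα (k + 1); positivity)
    have n1 := norm_add_le (g i (v i k ω)) (ε i (k + 1) ω)
    have n2 := hC i _ (hvX i k ω)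
    nlinarith [sq_nonneg (‖ε i (k + 1) ω‖ - 1), norm_nonneg (ε i (k + 1) ω)]
  have hi1 : ∀ i k, Integrable (fun ω => 2 * α (k + 1) * (C i + 1 + ‖ε i (k + 1) ω‖ ^ 2)) μ :=
    fun i k => ((integrable_const _).add (hεint i k)).const_mul _
  have hbi : ∀ k, Integrable (b k) μ := fun k => integrable_finsetSum _ fun i _ => hi1 i k
  have hbint : ∀ k, ∫ ω, b k ω ∂μ ≤ α (k + 1) * ∑ i, 2 * (C i + 1 + ν i ^ 2) := by
    intro k
    rw [hbdef, integral_finsetSum _ fun i _ => hi1 i k, Finset.mul_sum]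
    refine Finset.sum_le_sum fun i _ => ?_
    rw [integral_const_mul, integral_add (integrable_const _) (hεint i k)]
    simp only [integral_const, probReal_univ, one_smul]
    have := hν i k
    have := hα (k + 1)
    nlinarith
  have hb0 : ∀ k, 0 ≤ ∫ ω, b k ω ∂μ := fun k =>
    integral_nonneg fun ω => (norm_nonneg _).trans (hx j k ω)
  have hblim : Tendsto (fun k => ∫ ω, b k ω ∂μ) atTop (nhds 0) := by
    refine squeeze_zero hb0 hbint ?_
    simpa using ((tendsto_add_atTop_iff_nat 1).2 hαlim).mul_const _
  have helim : Tendsto (fun s => 2 * ∑ r ∈ Finset.range (m * Q), ∫ ω, b (s + r) ω ∂μ)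
      atTop (nhds 0) := by
    have := (tendsto_finsetSum (Finset.range (m * Q)) fun r _ =>
      (tendsto_add_atTop_iff_nat r).2 hblim).const_mul 2
    simpa using this
  have hex : ∀ k, ∃ c, UBC μ w k c := by
    intro k
    have h0 : UBC μ w 0 (∑ i, ∑ j, ‖w₀ i - w₀ j‖) := by
      refine ⟨fun _ => ∑ i, ∑ j, ‖w₀ i - w₀ j‖, integrable_const _, ?_, by simp⟩
      intro ω i j
      rw [hw0, hw0]
      exact (Finset.single_le_sum (f := fun j => ‖w₀ i - w₀ j‖)
        (fun _ _ => norm_nonneg _) (Finset.mem_univ j)).trans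
        (Finset.single_le_sum (f := fun i => ∑ j, ‖w₀ i - w₀ j‖)
        (fun _ _ => Finset.sum_nonneg fun _ _ => norm_nonneg _) (Finset.mem_univ i))
    have := UBC_step μ hm a hann harow w b hx hbi _ 0 k 0 le_rfl zero_le_one
      (fun i j => phiC_nonneg a hann _ _ _ _) h0
    rw [zero_add] at this
    exact ⟨_, this⟩
  have hfin := UBC_lim (UBC μ w) (fun _ _ _ h hc => h.mono hc) hex (m * Q)
    (Nat.mul_pos hm hQ) (η ^ (m * Q)) (by positivity) (pow_le_one₀ hη0.le hη1.le) _ helim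
    (fun s c h => UBC_step μ hm a hann harow w b hx hbi c s (m * Q) _ (by positivity)
      (pow_le_one₀ hη0.le hη1.le)
      (fun i j => phiC_lower a hann η hη0 haη haself hconn s i j) h)
  rw [Metric.tendsto_atTop]
  intro ξ hξ
  obtain ⟨N, hN⟩ := hfin (ξ / 2) (half_pos hξ)
  refine ⟨N, fun k hk => ?_⟩
  obtain ⟨h, h1, h2, h3⟩ := hN k hk
  have hm' : (m : ℝ) ≠ 0 := by exact_mod_cast hm.ne'
  have hle : ∀ ω, ‖w j k ω - y k ω‖ ≤ h ω := by
    intro ω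
    have e : w j k ω - y k ω = (m : ℝ)⁻¹ • ∑ i, (w j k ω - w i k ω) := by
      rw [hy, Finset.sum_sub_distrib, smul_sub]
      simp only [Finset.sum_const, Finset.card_univ, Fintype.card_fin]
      rw [← Nat.cast_smul_eq_nsmul ℝ, smul_smul, inv_mul_cancel₀ hm', one_smul]
    rw [e, norm_smul, norm_inv, Real.norm_natCast]
    have : ‖∑ i, (w j k ω - w i k ω)‖ ≤ m * h ω := by
      refine (norm_sum_le _ _).trans ?_
      calc _ ≤ ∑ _i : Fin m, h ω := Finset.sum_le_sum fun i _ => h2 ω j i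
        _ = _ := by simp
    calc _ ≤ (m : ℝ)⁻¹ * (m * h ω) := by gcongr
      _ = h ω := by field_simp
  have hle2 : ∫ ω, ‖w j k ω - y k ω‖ ∂μ ≤ ∫ ω, h ω ∂μ :=
    integral_mono_of_nonneg (Eventually.of_forall fun _ => norm_nonneg _) h1
      (Eventually.of_forall hle)
  rw [Real.dist_eq, sub_zero, abs_of_nonneg (integral_nonneg fun _ => norm_nonneg _)]
  linarith
end

section
/- Assume X is nonempty closed convex, the connectivity and doubly stochastic weight assumptions hold, ‖∇f_i(x)‖ ≤ C_i for all x ∈ X, and the errors satisfy E[‖ε_{i,k+1}‖² | F_k] ≤ ν_i² almost surely for all i and k, where F_k is the σ-algebra generated by the errors up to time k. If Σ_{k=0}^{∞} α_{k+1}² < ∞, then with probability 1, Σ_{k=1}^{∞} α_{k+2} ‖y_{k+1} − w_{j,k+1}‖ < ∞ for all j ∈ V; furthermore, for all j ∈ V, lim_{k→∞} ‖y_{k+1} − w_{j,k+1}‖ = 0 with probability 1 and in mean square. -/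
open Filter Finset MeasureTheory

def cPhi {m : ℕ} (a : ℕ → Fin m → Fin m → ℝ) (k : ℕ) : ℕ → Fin m → Fin m → ℝ
  | 0 => fun i j => if i = j then 1 else 0
  | s + 1 => fun i j => ∑ l, a (k + s + 1) i l * cPhi a k s l j

section weights

variable {m : ℕ} {a : ℕ → Fin m → Fin m → ℝ}

lemma cPhi_nonneg (hann : ∀ k i j, 0 ≤ a k i j) (k s : ℕ) : ∀ i j, 0 ≤ cPhi a k s i j := by
  induction s with
  | zero => intro i j; simp only [cPhi]; split_ifs <;> norm_num
  | succ s ih =>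
    intro i j
    simp only [cPhi]
    exact Finset.sum_nonneg fun l _ => mul_nonneg (hann _ _ _) (ih _ _)

lemma cPhi_row (harow : ∀ k i, ∑ j, a k i j = 1) (k s : ℕ) : ∀ i, ∑ j, cPhi a k s i j = 1 := by
  induction s with
  | zero => intro i; simp [cPhi]
  | succ s ih =>
    intro i
    simp only [cPhi]
    rw [Finset.sum_comm]
    simp only [← Finset.mul_sum, ih, mul_one, harow]

lemma cPhi_lower (hann : ∀ k i j, 0 ≤ a k i j) {η : ℝ} (hη0 : 0 < η)
    (haη : ∀ k i j, 0 < a k i j → η ≤ a k i j) (k s : ℕ) :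
    ∀ i j, 0 < cPhi a k s i j → η ^ s ≤ cPhi a k s i j := by
  induction s with
  | zero =>
    intro i j h
    simp only [cPhi] at h ⊢
    split_ifs at h ⊢ <;> simp_all
  | succ s ih =>
    intro i j h
    simp only [cPhi] at h ⊢
    have hnn : ∀ l ∈ (univ : Finset (Fin m)), 0 ≤ a (k + s + 1) i l * cPhi a k s l j :=
      fun l _ => mul_nonneg (hann _ _ _) (cPhi_nonneg hann k s _ _)
    obtain ⟨l, hl, hpos⟩ := (Finset.sum_pos_iff_of_nonneg hnn).1 h
    have h1 : 0 < a (k + s + 1) i l := by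
      rcases (hann (k+s+1) i l).lt_or_eq with h | h
      · exact h
      · rw [← h] at hpos; simp at hpos
    have h2 : 0 < cPhi a k s l j := by
      rcases (cPhi_nonneg hann k s l j).lt_or_eq with h | h
      · exact h
      · rw [← h] at hpos; simp at hpos
    calc η ^ (s+1) = η * η ^ s := by ring
      _ ≤ a (k + s + 1) i l * cPhi a k s l j :=
        mul_le_mul (haη _ _ _ h1) (ih _ _ h2) (by positivity) h1.le
      _ ≤ _ := Finset.single_le_sum hnn hl

lemma cPhi_step (hann : ∀ k i j, 0 ≤ a k i j) (k s : ℕ) {i l j : Fin m}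
    (h1 : 0 < a (k + s + 1) i l) (h2 : 0 < cPhi a k s l j) : 0 < cPhi a k (s + 1) i j := by
  simp only [cPhi]
  exact Finset.sum_pos' (fun l _ => mul_nonneg (hann _ _ _) (cPhi_nonneg hann k s _ _))
    ⟨l, mem_univ _, mul_pos h1 h2⟩

lemma cPhi_mono (hann : ∀ k i j, 0 ≤ a k i j) {η : ℝ} (hη0 : 0 < η)
    (haself : ∀ k i, η ≤ a k i i) (k s t : ℕ) (hst : s ≤ t) {i j : Fin m}
    (h2 : 0 < cPhi a k s i j) : 0 < cPhi a k t i j := by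
  induction t, hst using Nat.le_induction with
  | base => exact h2
  | succ t _ ih => exact cPhi_step hann k t (hη0.trans_le (haself _ _)) ih

lemma exists_exit {β : Type*} {r : β → β → Prop} {S : Set β} {x z : β}
    (h : Relation.ReflTransGen r x z) (hx : x ∈ S) (hz : z ∉ S) :
    ∃ u ∈ S, ∃ u' ∉ S, r u u' := by
  induction h with
  | refl => exact absurd hx hz
  | @tail b c _ hbc ih =>
    by_cases hb : b ∈ S
    · exact ⟨b, hb, c, hz, hbc⟩
    · exact ih hb

lemma cPhi_grow (hann : ∀ k i j, 0 ≤ a k i j) {η : ℝ} (hη0 : 0 < η)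
    (haself : ∀ k i, η ≤ a k i i) {Q : ℕ}
    (hconn : ∀ k : ℕ, ∀ i j : Fin m,
      Relation.ReflTransGen (fun u u' => ∃ l, 1 ≤ l ∧ l ≤ Q ∧ 0 < a (k + l) u' u) i j)
    (k : ℕ) (j : Fin m) (t : ℕ) :
    (∀ i, 0 < cPhi a k (t * Q) i j) ∨
      t < (univ.filter fun i => 0 < cPhi a k (t * Q) i j).card := by
  have h0 : 0 < cPhi a k 0 j j := by simp [cPhi]
  induction t with
  | zero =>
    right
    refine Finset.card_pos.2 ⟨j, ?_⟩
    simpa using h0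
  | succ t ih =>
    have hle : t * Q ≤ (t + 1) * Q := by nlinarith
    rcases ih with ih | ih
    · left
      exact fun i => cPhi_mono hann hη0 haself k _ _ hle (ih i)
    by_cases hall : ∀ i, 0 < cPhi a k (t * Q) i j
    · left
      exact fun i => cPhi_mono hann hη0 haself k _ _ hle (hall i)
    right
    push Not at hall
    obtain ⟨i, hi⟩ := hall
    obtain ⟨u, hu, u', hu', l, hl1, hlQ, hl⟩ :=
      exists_exit (S := {i | 0 < cPhi a k (t * Q) i j}) (hconn (k + t * Q) j i)
        (cPhi_mono hann hη0 haself k _ _ (Nat.zero_le _) h0) (by simpa using hi)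
    refine lt_of_le_of_lt (Nat.succ_le_of_lt ih) (Finset.card_lt_card ?_)
    rw [Finset.ssubset_iff_of_subset]
    · refine ⟨u', ?_, by simpa using hu'⟩
      simp only [mem_filter, mem_univ, true_and]
      obtain ⟨l, rfl⟩ : ∃ p, l = p + 1 := ⟨l - 1, by omega⟩
      have : 0 < cPhi a k (t * Q + l + 1) u' j := by
        refine cPhi_step hann k (t * Q + l) (l := u) ?_ ?_
        · have e : k + (t * Q + l) + 1 = k + t * Q + (l + 1) := by ring
          rw [e]; exact hl
        · exact cPhi_mono hann hη0 haself k _ _ (by omega) hu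
      exact cPhi_mono hann hη0 haself k _ _ (by nlinarith) this
    · intro x hx
      simp only [mem_filter, mem_univ, true_and] at hx ⊢
      exact cPhi_mono hann hη0 haself k _ _ hle hx

lemma cPhi_ge (hann : ∀ k i j, 0 ≤ a k i j) {η : ℝ} (hη0 : 0 < η)
    (haη : ∀ k i j, 0 < a k i j → η ≤ a k i j)
    (haself : ∀ k i, η ≤ a k i i) {Q : ℕ}
    (hconn : ∀ k : ℕ, ∀ i j : Fin m,
      Relation.ReflTransGen (fun u u' => ∃ l, 1 ≤ l ∧ l ≤ Q ∧ 0 < a (k + l) u' u) i j)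
    (k : ℕ) (i j : Fin m) : η ^ (m * Q) ≤ cPhi a k (m * Q) i j := by
  apply cPhi_lower hann hη0 haη
  rcases cPhi_grow hann hη0 haself hconn k j m with h | h
  · exact h i
  · have := Finset.card_le_univ (univ.filter fun i => 0 < cPhi a k (m * Q) i j)
    simp only [Fintype.card_fin] at this
    omega

end weights

section spread

variable {m : ℕ} {E : Type*} [NormedAddCommGroup E] [NormedSpace ℝ E]

noncomputable def cD (w : Fin m → E) : ℝ :=
  ((univ.sup fun p : Fin m × Fin m => ‖w p.1 - w p.2‖₊ : NNReal) : ℝ)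

lemma cD_nonneg (w : Fin m → E) : 0 ≤ cD w := NNReal.coe_nonneg _

lemma le_cD (w : Fin m → E) (i j : Fin m) : ‖w i - w j‖ ≤ cD w := by
  have := Finset.le_sup (f := fun p : Fin m × Fin m => ‖w p.1 - w p.2‖₊) (mem_univ (i, j))
  exact_mod_cast this

lemma cD_le (w : Fin m → E) {r : ℝ} (hr : 0 ≤ r) (h : ∀ i j, ‖w i - w j‖ ≤ r) : cD w ≤ r := by
  lift r to NNReal using hr
  unfold cD
  rw [NNReal.coe_le_coe]
  exact Finset.sup_le fun p _ => by exact_mod_cast h p.1 p.2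

lemma contract (w : Fin m → E) (p q : Fin m → ℝ) (hp : ∀ l, 0 ≤ p l) (hq : ∀ l, 0 ≤ q l)
    (hp1 : ∑ l, p l = 1) (hq1 : ∑ l, q l = 1) {δ : ℝ} (hδ : 0 ≤ δ) (i : Fin m) (hpi : δ ≤ p i)
    (hqi : δ ≤ q i) :
    ‖∑ l, p l • w l - ∑ l, q l • w l‖ ≤ (1 - δ ^ 2) * cD w := by
  have e : ∑ l, p l • w l - ∑ l, q l • w l = ∑ l, ∑ l', (p l * q l') • (w l - w l') := by
    have h1 : ∑ l, p l • w l = ∑ l, ∑ l', (p l * q l') • w l := by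
      refine Finset.sum_congr rfl fun l _ => ?_
      rw [← Finset.sum_smul, ← Finset.mul_sum, hq1, mul_one]
    have h2 : ∑ l, q l • w l = ∑ l, ∑ l', (p l * q l') • w l' := by
      rw [Finset.sum_comm]
      refine Finset.sum_congr rfl fun l _ => ?_
      rw [← Finset.sum_smul, ← Finset.sum_mul, hp1, one_mul]
    rw [h1, h2, ← Finset.sum_sub_distrib]
    simp only [← Finset.sum_sub_distrib, smul_sub]
  have hD := cD_nonneg w
  rw [e]
  calc _ ≤ ∑ l, ∑ l', ‖(p l * q l') • (w l - w l')‖ :=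
        (norm_sum_le _ _).trans (Finset.sum_le_sum fun l _ => norm_sum_le _ _)
    _ ≤ ∑ l, ∑ l', (p l * q l' * cD w - if l = i then (if l' = i then δ ^ 2 * cD w else 0) else 0) := by
        refine Finset.sum_le_sum fun l _ => Finset.sum_le_sum fun l' _ => ?_
        have h0 : 0 ≤ p l * q l' := mul_nonneg (hp _) (hq _)
        rw [norm_smul, Real.norm_of_nonneg h0]
        have h3 := mul_le_mul_of_nonneg_left (le_cD w l l') h0
        split_ifs with h1 h2
        · subst h1; subst h2
          have : δ ^ 2 ≤ p l' * q l' := by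
            rw [pow_two]; exact mul_le_mul hpi hqi hδ (hp _)
          have := mul_le_mul_of_nonneg_right this hD
          simp only [sub_self, norm_zero, mul_zero]
          linarith
        · linarith
        · linarith
    _ = _ := by
        simp only [Finset.sum_sub_distrib]
        simp [← Finset.sum_mul, ← Finset.mul_sum, hp1, hq1]
        ring

lemma unroll {a : ℕ → Fin m → Fin m → ℝ} (hann : ∀ k i j, 0 ≤ a k i j)
    (harow : ∀ k i, ∑ j, a k i j = 1) (w : ℕ → Fin m → E) (e : ℕ → ℝ)
    (h : ∀ k i, ‖w (k + 1) i - ∑ j, a (k + 1) i j • w k j‖ ≤ e (k + 1)) (k s : ℕ) :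
    ∀ i, ‖w (k + s) i - ∑ j, cPhi a k s i j • w k j‖ ≤ ∑ l ∈ range s, e (k + l + 1) := by
  induction s with
  | zero => intro i; simp [cPhi]
  | succ s ih =>
    intro i
    have e1 : ∑ j, cPhi a k (s + 1) i j • w k j =
        ∑ l, a (k + s + 1) i l • ∑ j, cPhi a k s l j • w k j := by
      simp only [cPhi, Finset.sum_smul, Finset.smul_sum, mul_smul]
      rw [Finset.sum_comm]
    have e2 : w (k + (s + 1)) i - ∑ j, cPhi a k (s + 1) i j • w k j =
        (w (k + s + 1) i - ∑ j, a (k + s + 1) i j • w (k + s) j) +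
        ∑ l, a (k + s + 1) i l • (w (k + s) l - ∑ j, cPhi a k s l j • w k j) := by
      rw [e1]
      simp only [smul_sub, Finset.sum_sub_distrib, ← add_assoc]
      abel
    rw [e2, Finset.sum_range_succ, add_comm (∑ l ∈ range s, _)]
    refine (norm_add_le _ _).trans (add_le_add (h _ _) ?_)
    refine (norm_sum_le _ _).trans ?_
    calc _ ≤ ∑ l, a (k + s + 1) i l * ∑ l ∈ range s, e (k + l + 1) := by
          refine Finset.sum_le_sum fun l _ => ?_
          rw [norm_smul, Real.norm_of_nonneg (hann _ _ _)]
          exact mul_le_mul_of_nonneg_left (ih l) (hann _ _ _)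
      _ = _ := by rw [← Finset.sum_mul, harow, one_mul]

lemma spread_rec {a : ℕ → Fin m → Fin m → ℝ} (hann : ∀ k i j, 0 ≤ a k i j)
    (harow : ∀ k i, ∑ j, a k i j = 1) (w : ℕ → Fin m → E) (e : ℕ → ℝ) (he : ∀ k, 0 ≤ e (k + 1))
    (h : ∀ k i, ‖w (k + 1) i - ∑ j, a (k + 1) i j • w k j‖ ≤ e (k + 1)) (k s : ℕ) {δ : ℝ}
    (hδ : 0 ≤ δ) (hδ1 : δ ≤ 1) (hge : ∀ i j, δ ≤ cPhi a k s i j) :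
    cD (w (k + s)) ≤ (1 - δ ^ 2) * cD (w k) + 2 * ∑ l ∈ range s, e (k + l + 1) := by
  have hs : 0 ≤ ∑ l ∈ range s, e (k + l + 1) := Finset.sum_nonneg fun l _ => he _
  have hD := cD_nonneg (w k)
  have : 0 ≤ 1 - δ ^ 2 := by nlinarith
  refine cD_le _ (by positivity) fun i j => ?_
  have h1 := unroll hann harow w e h k s i
  have h2 := unroll hann harow w e h k s j
  have h3 := contract (w k) (cPhi a k s i) (cPhi a k s j) (cPhi_nonneg hann k s i)
    (cPhi_nonneg hann k s j) (cPhi_row harow k s i) (cPhi_row harow k s j) hδ i (hge _ _) (hge _ _)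
  have e2 : w (k + s) i - w (k + s) j =
      (w (k + s) i - ∑ l, cPhi a k s i l • w k l) - (w (k + s) j - ∑ l, cPhi a k s j l • w k l)
      + (∑ l, cPhi a k s i l • w k l - ∑ l, cPhi a k s j l • w k l) := by abel
  rw [e2]
  have h4 := norm_add_le ((w (k + s) i - ∑ l, cPhi a k s i l • w k l) -
    (w (k + s) j - ∑ l, cPhi a k s j l • w k l))
    (∑ l, cPhi a k s i l • w k l - ∑ l, cPhi a k s j l • w k l)
  have h5 := norm_sub_le (w (k + s) i - ∑ l, cPhi a k s i l • w k l)
    (w (k + s) j - ∑ l, cPhi a k s j l • w k l)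
  linarith

lemma spread_sq {a : ℕ → Fin m → Fin m → ℝ} (hann : ∀ k i j, 0 ≤ a k i j)
    (harow : ∀ k i, ∑ j, a k i j = 1) (w : ℕ → Fin m → E) (e S : ℕ → ℝ) (he : ∀ k, 0 ≤ e (k + 1))
    (h : ∀ k i, ‖w (k + 1) i - ∑ j, a (k + 1) i j • w k j‖ ≤ e (k + 1))
    (heS : ∀ k, e (k + 1) ^ 2 ≤ S (k + 1)) (k s : ℕ) {δ : ℝ}
    (hδ : 0 < δ) (hδ1 : δ ≤ 1) (hge : ∀ i j, δ ≤ cPhi a k s i j) :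
    cD (w (k + s)) ^ 2 ≤ (1 - δ ^ 2) * cD (w k) ^ 2 +
      4 * s / δ ^ 2 * ∑ l ∈ range s, S (k + l + 1) := by
  have h1 := spread_rec hann harow w e he h k s hδ.le hδ1 hge
  have hs : 0 ≤ ∑ l ∈ range s, e (k + l + 1) := Finset.sum_nonneg fun l _ => he _
  have h2 : (∑ l ∈ range s, e (k + l + 1)) ^ 2 ≤ s * ∑ l ∈ range s, S (k + l + 1) := by
    refine (sq_sum_le_card_mul_sum_sq).trans ?_
    rw [card_range]
    gcongr with l _
    exact heS _
  have hD := cD_nonneg (w k)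
  have hD' := cD_nonneg (w (k + s))
  generalize cD (w k) = x at *
  generalize cD (w (k + s)) = z at *
  generalize ∑ l ∈ range s, e (k + l + 1) = b at *
  have h3 : z ^ 2 ≤ ((1 - δ ^ 2) * x + 2 * b) ^ 2 := pow_le_pow_left₀ hD' h1 2
  have h4 : ((1 - δ ^ 2) * x + 2 * b) ^ 2 ≤ (1 - δ ^ 2) * x ^ 2 + 4 * b ^ 2 / δ ^ 2 := by
    have hd : 0 < δ ^ 2 := by positivity
    have hd1 : δ ^ 2 ≤ 1 := by nlinarith
    generalize δ ^ 2 = d at *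
    have key : (1 - d) * x ^ 2 + 4 * b ^ 2 / d - ((1 - d) * x + 2 * b) ^ 2
        = (1 - d) * d * (x - 2 * b / d) ^ 2 := by
      field_simp
      ring
    have : 0 ≤ (1 - d) * d * (x - 2 * b / d) ^ 2 :=
      mul_nonneg (mul_nonneg (by linarith) hd.le) (sq_nonneg _)
    linarith
  have h5 : 4 * b ^ 2 / δ ^ 2 ≤ 4 * s / δ ^ 2 * ∑ l ∈ range s, S (k + l + 1) := by
    rw [div_mul_eq_mul_div]
    refine div_le_div_of_nonneg_right ?_ (by positivity)
    linarith
  linarith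

lemma spread_one {a : ℕ → Fin m → Fin m → ℝ} (hann : ∀ k i j, 0 ≤ a k i j)
    (harow : ∀ k i, ∑ j, a k i j = 1) (w : ℕ → Fin m → E) (e S : ℕ → ℝ) (he : ∀ k, 0 ≤ e (k + 1))
    (h : ∀ k i, ‖w (k + 1) i - ∑ j, a (k + 1) i j • w k j‖ ≤ e (k + 1))
    (heS : ∀ k, e (k + 1) ^ 2 ≤ S (k + 1)) (k : ℕ) :
    cD (w (k + 1)) ^ 2 ≤ 2 * cD (w k) ^ 2 + 8 * S (k + 1) := by
  have h1 := spread_rec hann harow w e he h k 1 le_rfl zero_le_one (cPhi_nonneg hann k 1)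
  have hD := cD_nonneg (w k)
  have hD' := cD_nonneg (w (k + 1))
  simp only [sum_range_one, add_zero] at h1
  have := heS k
  have h3 := pow_le_pow_left₀ hD' h1 2
  nlinarith [sq_nonneg (cD (w k) - 2 * e (k + 1))]

lemma avg_le (hm : 0 < m) (w : Fin m → E) (j : Fin m) :
    ‖(m : ℝ)⁻¹ • ∑ i, w i - w j‖ ≤ cD w := by
  have hm' : (m : ℝ) ≠ 0 := by positivity
  have e : (m : ℝ)⁻¹ • ∑ i, w i - w j = (m : ℝ)⁻¹ • ∑ i, (w i - w j) := by
    rw [Finset.sum_sub_distrib, smul_sub]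
    simp [← Nat.cast_smul_eq_nsmul ℝ, smul_smul, hm']
  rw [e, norm_smul, Real.norm_of_nonneg (by positivity)]
  have : ‖∑ i, (w i - w j)‖ ≤ m * cD w := by
    refine (norm_sum_le _ _).trans ((Finset.sum_le_sum fun i _ => le_cD w i j).trans ?_)
    simp
  calc _ ≤ (m : ℝ)⁻¹ * (m * cD w) := by gcongr
    _ = _ := by field_simp

end spread

lemma summable_of_rec (x c : ℕ → ℝ) (hx : ∀ k, 0 ≤ x k) (hc0 : ∀ k, 0 ≤ c k) (hc : Summable c)
    {ρ : ℝ} (hρ : ρ < 1) (B : ℕ) (h : ∀ k, x (k + B) ≤ ρ * x k + c k) :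
    Summable x := by
  have hB : 0 ≤ ∑ k ∈ range B, x k := Finset.sum_nonneg fun _ _ => hx _
  refine summable_of_sum_range_le (c := (∑ k ∈ range B, x k + ∑' k, c k) / (1 - ρ)) hx fun N => ?_
  rw [le_div_iff₀ (by linarith)]
  have h1 : ∑ k ∈ range N, x k ≤ ∑ k ∈ range (B + N), x k :=
    Finset.sum_le_sum_of_subset_of_nonneg (by simp) fun _ _ _ => hx _
  rw [Finset.sum_range_add] at h1
  have h2 : ∑ k ∈ range N, x (B + k) ≤ ρ * ∑ k ∈ range N, x k + ∑ k ∈ range N, c k := by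
    rw [Finset.mul_sum, ← Finset.sum_add_distrib]
    refine Finset.sum_le_sum fun k _ => ?_
    rw [add_comm]
    exact h k
  have h3 := hc.sum_le_tsum (range N) fun _ _ => hc0 _
  linarith

lemma summable_shift_sum (S : ℕ → ℝ) (hS : Summable fun k => S (k + 1)) (K : ℝ) (B : ℕ) :
    Summable fun k => K * ∑ l ∈ range B, S (k + l + 1) := by
  refine Summable.mul_left _ (summable_sum fun l _ => ?_)
  have := (summable_nat_add_iff l).2 hS
  convert this using 1

section prob

variable {Ω : Type*} [MeasurableSpace Ω] {μ : Measure Ω}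

lemma lint_rec (f f' g : Ω → ℝ) (hf' : ∀ ω, 0 ≤ f' ω) (hg : ∀ ω, 0 ≤ g ω) (hgi : Integrable g μ)
    {p q : ℝ} (hp : 0 ≤ p) (hq : 0 ≤ q) (h : ∀ ω, f ω ≤ p * f' ω + q * g ω)
    (hfin : ∫⁻ ω, ENNReal.ofReal (f' ω) ∂μ ≠ ⊤) :
    (∫⁻ ω, ENNReal.ofReal (f ω) ∂μ ≠ ⊤) ∧
    (∫⁻ ω, ENNReal.ofReal (f ω) ∂μ).toReal ≤
      p * (∫⁻ ω, ENNReal.ofReal (f' ω) ∂μ).toReal + q * ∫ ω, g ω ∂μ := by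
  have key : ∫⁻ ω, ENNReal.ofReal (f ω) ∂μ ≤
      ENNReal.ofReal p * ∫⁻ ω, ENNReal.ofReal (f' ω) ∂μ + ENNReal.ofReal (q * ∫ ω, g ω ∂μ) := by
    rw [← integral_const_mul, ofReal_integral_eq_lintegral_ofReal (hgi.const_mul q)
      (ae_of_all _ fun ω => mul_nonneg hq (hg ω)), ← lintegral_const_mul' _ _ ENNReal.ofReal_ne_top,
      ← lintegral_add_right' _ (hgi.const_mul q).aemeasurable.ennreal_ofReal]
    refine lintegral_mono fun ω => ?_
    rw [← ENNReal.ofReal_mul hp, ← ENNReal.ofReal_add (mul_nonneg hp (hf' ω))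
      (mul_nonneg hq (hg ω))]
    exact ENNReal.ofReal_le_ofReal (h ω)
  have hfin2 : ENNReal.ofReal p * ∫⁻ ω, ENNReal.ofReal (f' ω) ∂μ ≠ ⊤ :=
    ENNReal.mul_ne_top ENNReal.ofReal_ne_top hfin
  have hfin3 : ENNReal.ofReal p * ∫⁻ ω, ENNReal.ofReal (f' ω) ∂μ +
    ENNReal.ofReal (q * ∫ ω, g ω ∂μ) ≠ ⊤ := ENNReal.add_ne_top.2 ⟨hfin2, ENNReal.ofReal_ne_top⟩
  refine ⟨ne_top_of_le_ne_top hfin3 key, ?_⟩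
  have := ENNReal.toReal_mono hfin3 key
  rw [ENNReal.toReal_add hfin2 ENNReal.ofReal_ne_top, ENNReal.toReal_mul,
    ENNReal.toReal_ofReal hp, ENNReal.toReal_ofReal
      (mul_nonneg hq (integral_nonneg hg))] at this
  exact this

lemma int_le_lint (f f' : Ω → ℝ) (hf : ∀ ω, 0 ≤ f ω) (h : ∀ ω, f ω ≤ f' ω)
    (hfin : ∫⁻ ω, ENNReal.ofReal (f' ω) ∂μ ≠ ⊤) :
    ∫ ω, f ω ∂μ ≤ (∫⁻ ω, ENNReal.ofReal (f' ω) ∂μ).toReal := by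
  by_cases hm : AEStronglyMeasurable f μ
  · rw [integral_eq_lintegral_of_nonneg_ae (ae_of_all _ hf) hm]
    exact ENNReal.toReal_mono hfin (lintegral_mono fun ω => ENNReal.ofReal_le_ofReal (h ω))
  · rw [integral_non_aestronglyMeasurable hm]
    exact ENNReal.toReal_nonneg

lemma ae_summable_of (S : ℕ → Ω → ℝ) (h0 : ∀ k ω, 0 ≤ S k ω) (hi : ∀ k, Integrable (S k) μ)
    (hs : Summable fun k => ∫ ω, S k ω ∂μ) : ∀ᵐ ω ∂μ, Summable fun k => S k ω := by
  have h1 : ∫⁻ ω, ∑' k, ENNReal.ofReal (S k ω) ∂μ ≠ ⊤ := by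
    rw [lintegral_tsum fun k => (hi k).aemeasurable.ennreal_ofReal]
    simp_rw [← fun k => ofReal_integral_eq_lintegral_ofReal (hi k) (ae_of_all _ (h0 k))]
    exact hs.tsum_ofReal_ne_top
  have h2 := ae_lt_top' (AEMeasurable.ennreal_tsum
    fun k => (hi k).aemeasurable.ennreal_ofReal) h1
  filter_upwards [h2] with ω hω
  have := ENNReal.summable_toReal hω.ne
  simpa [ENNReal.toReal_ofReal (h0 _ _)] using this

end prob

set_option maxHeartbeats 2000000

/-- Theorem 6.1 (almost sure and mean-square consensus): with `X` nonempty closed convex,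
the connectivity and doubly stochastic weight assumptions, uniform subgradient bounds
`‖∇f_i(x)‖ ≤ C_i` on `X`, conditional second-moment bounds `E[‖ε_{i,k+1}‖² | F_k] ≤ ν_i²`
a.s. (where `F_k` is the σ-algebra generated by the errors up to time `k`), and
`∑_k α_{k+1}² < ∞`, we have: with probability 1,
`∑_{k≥1} α_{k+2} ‖y_{k+1} − w_{j,k+1}‖ < ∞` for all `j`; moreover, for all `j`,
`‖y_{k+1} − w_{j,k+1}‖ → 0` with probability 1 and in mean square. -/
theorem as_and_ms_consensus {n m Q : ℕ} (hm : 0 < m) (hQ : 1 ≤ Q)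
    {Ω : Type*} [MeasurableSpace Ω] (μ : Measure Ω) [IsProbabilityMeasure μ]
    (X : Set (EuclideanSpace ℝ (Fin n))) (hXne : X.Nonempty)
    (hXcl : IsClosed X) (hXcv : Convex ℝ X)
    -- Euclidean projection onto X
    (P : EuclideanSpace ℝ (Fin n) → EuclideanSpace ℝ (Fin n))
    (hPmem : ∀ z, P z ∈ X)
    (hPdist : ∀ z, ∀ x ∈ X, ‖z - P z‖ ≤ ‖z - x‖)
    -- subgradients, uniformly bounded over X
    (g : Fin m → EuclideanSpace ℝ (Fin n) → EuclideanSpace ℝ (Fin n))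
    (C : Fin m → ℝ) (hC : ∀ i, ∀ x ∈ X, ‖g i x‖ ≤ C i)
    -- weights: doubly stochastic, uniformly positive entries
    (a : ℕ → Fin m → Fin m → ℝ)
    (hann : ∀ k i j, 0 ≤ a k i j)
    (harow : ∀ k i, ∑ j, a k i j = 1)
    (hacol : ∀ k j, ∑ i, a k i j = 1)
    (η : ℝ) (hη0 : 0 < η) (hη1 : η < 1)
    (haη : ∀ k i j, 0 < a k i j → η ≤ a k i j)
    (haself : ∀ k i, η ≤ a k i i)
    -- Q-step strong connectivity
    (hconn : ∀ k : ℕ, ∀ i j : Fin m,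
      Relation.ReflTransGen (fun u u' => ∃ l, 1 ≤ l ∧ l ≤ Q ∧ 0 < a (k + l) u' u) i j)
    -- square-summable stepsizes
    (α : ℕ → ℝ) (hα : ∀ k, 0 < α k)
    (hα2 : Summable fun k => α (k + 1) ^ 2)
    -- stochastic errors, their natural filtration, and conditional second-moment bounds
    (ε : Fin m → ℕ → Ω → EuclideanSpace ℝ (Fin n))
    (hεmeas : ∀ i k, Measurable (ε i k))
    (hεint : ∀ i k, Integrable (fun ω => ‖ε i k ω‖ ^ 2) μ)
    (F : ℕ → MeasurableSpace Ω)
    (hF : ∀ k, F k = ⨆ (i : Fin m) (ℓ : ℕ) (_ : ℓ ≤ k),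
      MeasurableSpace.comap (fun ω => ε i ℓ ω) inferInstance)
    (ν : Fin m → ℝ)
    (hν : ∀ i k, ∀ᵐ ω ∂μ, (μ[fun ω' => ‖ε i (k + 1) ω'‖ ^ 2|F k]) ω ≤ ν i ^ 2)
    -- the algorithm (pathwise), with deterministic initial points in X
    (w v : Fin m → ℕ → Ω → EuclideanSpace ℝ (Fin n))
    (w₀ : Fin m → EuclideanSpace ℝ (Fin n))
    (hw0 : ∀ i ω, w i 0 ω = w₀ i) (hw0X : ∀ i, w₀ i ∈ X)
    (hv : ∀ i k ω, v i k ω = ∑ j, a (k + 1) i j • w j k ω)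
    (hw : ∀ i k ω,
      w i (k + 1) ω = P (v i k ω - α (k + 1) • (g i (v i k ω) + ε i (k + 1) ω)))
    (y : ℕ → Ω → EuclideanSpace ℝ (Fin n))
    (hy : ∀ k ω, y k ω = (m : ℝ)⁻¹ • ∑ i, w i k ω) :
    (∀ᵐ ω ∂μ, ∀ j : Fin m,
        Summable fun k => α (k + 2) * ‖y (k + 1) ω - w j (k + 1) ω‖) ∧
      (∀ j : Fin m,
        (∀ᵐ ω ∂μ, Tendsto (fun k => ‖y (k + 1) ω - w j (k + 1) ω‖) atTop (nhds 0)) ∧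
          Tendsto (fun k => ∫ ω, ‖y (k + 1) ω - w j (k + 1) ω‖ ^ 2 ∂μ) atTop (nhds 0)) := by
  -- finite quantities
  set K : ℝ := ∑ i, |C i| with hK
  have hK0 : 0 ≤ K := Finset.sum_nonneg fun _ _ => abs_nonneg _
  let e : ℕ → Ω → ℝ := fun k ω => 2 * α k * (K + ∑ i, ‖ε i k ω‖)
  let S : ℕ → Ω → ℝ := fun k ω => 8 * α k ^ 2 * (K ^ 2 + m * ∑ i, ‖ε i k ω‖ ^ 2)
  let W : Ω → ℕ → Fin m → EuclideanSpace ℝ (Fin n) := fun ω k i => w i k ω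
  have he0 : ∀ ω k, 0 ≤ e k ω := fun ω k => by
    have := hα k
    have : 0 ≤ ∑ i, ‖ε i k ω‖ := Finset.sum_nonneg fun _ _ => norm_nonneg _
    positivity
  have hS0 : ∀ k ω, 0 ≤ S k ω := fun k ω => by
    have : 0 ≤ ∑ i, ‖ε i k ω‖ ^ 2 := Finset.sum_nonneg fun _ _ => sq_nonneg _
    positivity
  have heS : ∀ ω k, e k ω ^ 2 ≤ S k ω := fun ω k => by
    have h1 : (∑ i, ‖ε i k ω‖) ^ 2 ≤ m * ∑ i, ‖ε i k ω‖ ^ 2 := by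
      have := sq_sum_le_card_mul_sum_sq (s := (univ : Finset (Fin m))) (f := fun i => ‖ε i k ω‖)
      simpa using this
    have h2 : (K + ∑ i, ‖ε i k ω‖) ^ 2 ≤ 2 * (K ^ 2 + m * ∑ i, ‖ε i k ω‖ ^ 2) := by
      nlinarith [sq_nonneg (K - ∑ i, ‖ε i k ω‖)]
    calc e k ω ^ 2 = 4 * α k ^ 2 * (K + ∑ i, ‖ε i k ω‖) ^ 2 := by simp only [e]; ring
      _ ≤ 4 * α k ^ 2 * (2 * (K ^ 2 + m * ∑ i, ‖ε i k ω‖ ^ 2)) := by gcongr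
      _ = S k ω := by simp only [S]; ring
  have hwX : ∀ i k ω, w i k ω ∈ X := by
    intro i k ω
    cases k with
    | zero => rw [hw0]; exact hw0X i
    | succ k => rw [hw]; exact hPmem _
  have hvX : ∀ i k ω, v i k ω ∈ X := by
    intro i k ω
    rw [hv]
    exact hXcv.sum_mem (fun j _ => hann _ _ _) (harow _ _) fun j _ => hwX j k ω
  have hstep : ∀ ω k i, ‖W ω (k + 1) i - ∑ j, a (k + 1) i j • W ω k j‖ ≤ e (k + 1) ω := by
    intro ω k i
    simp only [W]
    rw [← hv, hw]
    set z := v i k ω - α (k + 1) • (g i (v i k ω) + ε i (k + 1) ω) with hz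
    have h1 := hPdist z _ (hvX i k ω)
    have h2 : ‖z - v i k ω‖ ≤ α (k + 1) * (K + ∑ i, ‖ε i (k + 1) ω‖) := by
      have : z - v i k ω = -(α (k + 1) • (g i (v i k ω) + ε i (k + 1) ω)) := by rw [hz]; abel
      rw [this, norm_neg, norm_smul, Real.norm_of_nonneg (hα _).le]
      refine mul_le_mul_of_nonneg_left ((norm_add_le _ _).trans (add_le_add ?_ ?_)) (hα _).le
      · refine ((hC i _ (hvX i k ω)).trans (le_abs_self _)).trans ?_
        exact Finset.single_le_sum (f := fun i => |C i|) (fun _ _ => abs_nonneg _) (mem_univ i)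
      · exact Finset.single_le_sum (f := fun i => ‖ε i (k + 1) ω‖)
          (fun _ _ => norm_nonneg _) (mem_univ i)
    have h3 : ‖P z - v i k ω‖ ≤ ‖z - P z‖ + ‖z - v i k ω‖ := by
      rw [norm_sub_rev z (P z)]
      have : P z - v i k ω = (P z - z) + (z - v i k ω) := by abel
      rw [this]; exact norm_add_le _ _
    simp only [e]
    linarith
  -- contraction data
  set B := m * Q with hB
  set δ := η ^ B with hδdef
  have hδ : 0 < δ := by positivity
  have hδ1 : δ ≤ 1 := pow_le_one₀ hη0.le hη1.le
  have hge : ∀ k i j, δ ≤ cPhi a k B i j := fun k => cPhi_ge hann hη0 haη haself hconn k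
  have hρ : 1 - δ ^ 2 < 1 := by have : 0 < δ ^ 2 := by positivity
                                linarith
  have hρ0 : 0 ≤ 1 - δ ^ 2 := by nlinarith
  have hq0 : (0 : ℝ) ≤ 4 * B / δ ^ 2 := by positivity
  have hrecB : ∀ ω k, cD (W ω (k + B)) ^ 2 ≤ (1 - δ ^ 2) * cD (W ω k) ^ 2 +
      4 * B / δ ^ 2 * ∑ l ∈ range B, S (k + l + 1) ω := fun ω k =>
    spread_sq hann harow (W ω) (fun k => e k ω) (fun k => S k ω) (fun k => he0 ω _)
      (hstep ω) (fun k => heS ω _) k B hδ hδ1 (hge k)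
  have hrec1 : ∀ ω k, cD (W ω (k + 1)) ^ 2 ≤ 2 * cD (W ω k) ^ 2 + 8 * S (k + 1) ω := fun ω k =>
    spread_one hann harow (W ω) (fun k => e k ω) (fun k => S k ω) (fun k => he0 ω _)
      (hstep ω) (fun k => heS ω _) k
  -- integrals of the errors
  have hSi : ∀ k, Integrable (S k) μ := fun k =>
    (((integrable_const _).add ((integrable_finsetSum _ fun i _ => hεint i k).const_mul _))).const_mul _
  have hFle : ∀ k, F k ≤ ‹MeasurableSpace Ω› := fun k => by
    rw [hF]
    exact iSup_le fun i => iSup_le fun l => iSup_le fun _ => (hεmeas i l).comap_le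
  have hεb : ∀ i k, ∫ ω, ‖ε i (k + 1) ω‖ ^ 2 ∂μ ≤ ν i ^ 2 := fun i k => by
    rw [← integral_condExp (hFle k)]
    calc _ ≤ ∫ _, ν i ^ 2 ∂μ := integral_mono_ae integrable_condExp (integrable_const _) (hν i k)
      _ = _ := by simp
  have hSb : ∀ k, ∫ ω, S (k + 1) ω ∂μ ≤ α (k + 1) ^ 2 * (8 * (K ^ 2 + m * ∑ i, ν i ^ 2)) := by
    intro k
    have : ∫ ω, S (k + 1) ω ∂μ = 8 * α (k + 1) ^ 2 *
        (K ^ 2 + m * ∑ i, ∫ ω, ‖ε i (k + 1) ω‖ ^ 2 ∂μ) := by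
      simp only [S]
      rw [integral_const_mul, integral_add (integrable_const _)
        ((integrable_finsetSum _ fun i _ => hεint i (k + 1)).const_mul _), integral_const_mul,
        integral_finsetSum _ fun i _ => hεint i (k + 1)]
      simp
    rw [this]
    calc _ ≤ 8 * α (k + 1) ^ 2 * (K ^ 2 + m * ∑ i, ν i ^ 2) := by
          gcongr with i _
          exact hεb i k
      _ = _ := by ring
  have hSsum : Summable fun k => ∫ ω, S (k + 1) ω ∂μ :=
    Summable.of_nonneg_of_le (fun k => integral_nonneg (hS0 _)) hSb (hα2.mul_right _)
  have hSas : ∀ᵐ ω ∂μ, Summable fun k => S (k + 1) ω :=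
    ae_summable_of (fun k => S (k + 1)) (fun k => hS0 _) (fun k => hSi _) hSsum
  have hXas : ∀ᵐ ω ∂μ, Summable fun k => cD (W ω k) ^ 2 := by
    filter_upwards [hSas] with ω hω
    exact summable_of_rec _ (fun k => 4 * B / δ ^ 2 * ∑ l ∈ range B, S (k + l + 1) ω)
      (fun k => sq_nonneg _)
      (fun k => mul_nonneg hq0 (Finset.sum_nonneg fun l _ => hS0 _ _))
      (summable_shift_sum (fun k => S k ω) hω _ B) hρ B (hrecB ω)
  have hle : ∀ j k ω, ‖y k ω - w j k ω‖ ≤ cD (W ω k) := fun j k ω => by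
    rw [hy]; exact avg_le hm (W ω k) j
  -- mean square
  have hfin : ∀ k, ∫⁻ ω, ENNReal.ofReal (cD (W ω k) ^ 2) ∂μ ≠ ⊤ := by
    intro k
    induction k with
    | zero =>
      have : ∀ ω, W ω 0 = w₀ := fun ω => funext fun i => hw0 i ω
      simp [this]
    | succ k ih =>
      exact (lint_rec (fun ω => cD (W ω (k + 1)) ^ 2) (fun ω => cD (W ω k) ^ 2) (S (k + 1))
        (fun _ => sq_nonneg _) (hS0 _) (hSi _) (by norm_num : (0 : ℝ) ≤ 2)
        (by norm_num : (0 : ℝ) ≤ 8) (fun ω => hrec1 ω k) ih).1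
  have hms : Summable fun k => (∫⁻ ω, ENNReal.ofReal (cD (W ω k) ^ 2) ∂μ).toReal := by
    refine summable_of_rec _
      (fun k => 4 * B / δ ^ 2 * ∑ l ∈ range B, ∫ ω, S (k + l + 1) ω ∂μ)
      (fun k => ENNReal.toReal_nonneg)
      (fun k => mul_nonneg hq0 (Finset.sum_nonneg fun l _ => integral_nonneg (hS0 _)))
      (summable_shift_sum (fun k => ∫ ω, S k ω ∂μ) hSsum _ B) hρ B fun k => ?_
    have := (lint_rec (fun ω => cD (W ω (k + B)) ^ 2) (fun ω => cD (W ω k) ^ 2)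
      (fun ω => ∑ l ∈ range B, S (k + l + 1) ω)
      (fun _ => sq_nonneg _) (fun ω => Finset.sum_nonneg fun l _ => hS0 _ _)
      (integrable_finsetSum _ fun l _ => hSi _) hρ0 hq0 (fun ω => hrecB ω k) (hfin k)).2
    rwa [integral_finsetSum _ fun l _ => hSi _] at this
  refine ⟨?_, fun j => ⟨?_, ?_⟩⟩
  · filter_upwards [hXas] with ω hω j
    have h1 : Summable fun k => cD (W ω (k + 1)) ^ 2 := (summable_nat_add_iff 1).2 hω
    have h2 : Summable fun k => α (k + 2) ^ 2 := (summable_nat_add_iff 1).2 hα2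
    refine Summable.of_nonneg_of_le (fun k => mul_nonneg (hα _).le (norm_nonneg _)) (fun k => ?_)
      (h2.add h1)
    have h3 := mul_le_mul_of_nonneg_left (hle j (k + 1) ω) (hα (k + 2)).le
    nlinarith [sq_nonneg (α (k + 2) - cD (W ω (k + 1))), sq_nonneg (α (k + 2)),
      sq_nonneg (cD (W ω (k + 1)))]
  · filter_upwards [hXas] with ω hω
    have h1 : Tendsto (fun k => cD (W ω (k + 1)) ^ 2) atTop (nhds 0) :=
      ((summable_nat_add_iff 1).2 hω).tendsto_atTop_zero
    have h2 : Tendsto (fun k => cD (W ω (k + 1))) atTop (nhds 0) := by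
      have := h1.sqrt
      simpa [Real.sqrt_sq (cD_nonneg _)] using this
    exact squeeze_zero (fun k => norm_nonneg _) (fun k => hle j (k + 1) ω) h2
  · refine squeeze_zero (fun k => integral_nonneg fun ω => sq_nonneg _) (fun k => ?_)
      ((summable_nat_add_iff 1).2 hms).tendsto_atTop_zero
    exact int_le_lint _ _ (fun ω => sq_nonneg _)
      (fun ω => pow_le_pow_left₀ (norm_nonneg _) (hle j (k + 1) ω) 2) (hfin (k + 1))
end
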